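/- arXiv:0711.4228 — 2 statements merged into one kernel-verified Lean document; each statement's English description precedes it below -/
import Mathlib

section
/- For every n ≥ 2, there exists a partition of ℝ^n into countably many pairwise disjoint measurable regions, each of Lebesgue measure 1, whose union is all of ℝ^n, and whose limiting perimeter-per-volume ratio equals the infimum of the limiting perimeter-per-volume ratios over all partitions of ℝ^n into countably many pairwise disjoint measurable regions of Lebesgue measure 1. In other words, a perimeter-minimizing partition of ℝ^n into unit volumes exists. -/
open MeasureTheory Set Metric Filter

/-- The perimeter-per-volume ratio at radius `r` of a countable family of regions in `ℝⁿ`: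
the `(n-1)`-dimensional Hausdorff measure of the union of the topological boundaries
intersected with the closed ball of radius `r` about the origin, divided by the Lebesgue
measure of that ball. -/
noncomputable def perimVolRatio (n : ℕ) (R : ℕ → Set (EuclideanSpace ℝ (Fin n))) (r : ℝ) :
    ENNReal :=
  μH[(n : ℝ) - 1] ((⋃ j, frontier (R j)) ∩ closedBall 0 r) /
    volume (closedBall (0 : EuclideanSpace ℝ (Fin n)) r)

/-- The limiting perimeter-per-volume ratio: `limsup_{r → ∞}` of the ratio at radius `r`. -/
noncomputable def limitRatio (n : ℕ) (R : ℕ → Set (EuclideanSpace ℝ (Fin n))) : ENNReal :=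
  Filter.limsup (perimVolRatio n R) Filter.atTop

/-- A partition of `ℝⁿ` into unit volumes: countably many pairwise disjoint measurable sets,
each of Lebesgue measure 1, whose union is all of `ℝⁿ`. -/
def IsUnitPartition (n : ℕ) (R : ℕ → Set (EuclideanSpace ℝ (Fin n))) : Prop :=
  Pairwise (Function.onFun Disjoint R) ∧ (∀ j, MeasurableSet (R j)) ∧
    (∀ j, volume (R j) = 1) ∧ (⋃ j, R j) = univ


section core
variable {X : Type*} [TopologicalSpace X] [MeasurableSpace X] [BorelSpace X]

lemma grouping (μ : Measure X) (W : ℕ → Set X) (hWo : ∀ j, IsOpen (W j))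
    (hWd : Pairwise (fun i j => Disjoint (W i) (W j))) (hW1 : ∀ j, μ (W j) ≤ 1)
    (A : Set X) (hA : IsOpen A) (hAf : μ A < ⊤) :
    ∃ (N : ℕ) (G : ℕ → Set X), (∀ i, IsOpen (G i)) ∧
      (∀ i j, i ≠ j → Disjoint (G i) (G j)) ∧ (∀ i, μ (G i) ≤ 1) ∧ (∀ i, G i ⊆ A) ∧
      A ⊆ (⋃ j, W j)ᶜ ∪ ⋃ i : Fin N, G i := by
  have : IsFiniteMeasure (μ.restrict A) := ⟨by simpa using hAf⟩
  have ht := tendsto_measure_biUnion_Ici_zero_of_pairwise_disjoint (μ := μ.restrict A)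
    (fun i => (hWo i).measurableSet.nullMeasurableSet) hWd
  obtain ⟨J, hJ⟩ := (ht.eventually_lt_const (show (0 : ENNReal) < 1 by simp)).exists
  have hTo : IsOpen (⋃ i, ⋃ (_ : i ≥ J), W i) := isOpen_iUnion fun i => isOpen_iUnion fun _ => hWo i
  simp only [Function.comp] at hJ
  rw [Measure.restrict_apply hTo.measurableSet] at hJ
  have hdT : ∀ i < J, Disjoint (W i) (⋃ i, ⋃ (_ : i ≥ J), W i) := by
    intro i hi
    simp only [disjoint_iUnion_right]
    intro j hj
    exact hWd (by omega)
  refine ⟨J + 1, fun i => if i < J then W i ∩ A else if i = J then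
    (⋃ i, ⋃ (_ : i ≥ J), W i) ∩ A else ∅, ?_, ?_, ?_, ?_, ?_⟩
  · intro i
    dsimp only
    split_ifs
    · exact (hWo i).inter hA
    · exact hTo.inter hA
    · exact isOpen_empty
  · intro i j hij
    dsimp only
    split_ifs with h1 h2 h3 h4 h5 h6 <;> try simp
    · exact (hWd hij).mono inter_subset_left inter_subset_left
    · exact (hdT i h1).mono inter_subset_left inter_subset_left
    · exact ((hdT j h5).mono inter_subset_left inter_subset_left).symm
    · omega
  · intro i
    dsimp only
    split_ifs
    · exact (measure_mono inter_subset_left).trans (hW1 i)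
    · exact hJ.le
    · simp
  · intro i
    dsimp only
    split_ifs <;> simp
  · intro x hx
    by_cases hxW : x ∈ ⋃ j, W j
    · right
      obtain ⟨j, hj⟩ := mem_iUnion.1 hxW
      rw [mem_iUnion]
      by_cases hjJ : j < J
      · refine ⟨⟨j, by omega⟩, ?_⟩
        simp [hjJ, hj, hx]
      · refine ⟨⟨J, by omega⟩, ?_⟩
        simp only [lt_irrefl, if_false, if_true]
        exact ⟨mem_iUnion₂.2 ⟨j, by omega, hj⟩, hx⟩
    · exact Or.inl hxW

/-- state of the recursive construction -/
structure St (X : Type*) where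
  a : ℝ
  b : ℝ
  s : ℝ
  N : ℕ
  G : ℕ → Set X

/-- deficits -/
noncomputable def defi (μ : Measure X) (G : ℕ → Set X) (i : ℕ) : ℝ := 1 - (μ (G i)).toReal

/-- invariants of a state -/
structure StInv (μ : Measure X) (φ : X → ℝ) (σ : St X) : Prop where
  hG : ∀ i, IsOpen (σ.G i)
  hd : ∀ i j, i ≠ j → Disjoint (σ.G i) (σ.G j)
  h1 : ∀ i, μ (σ.G i) ≤ 1
  hA : ∀ i, σ.G i ⊆ φ ⁻¹' Ioo σ.a σ.b
  hab : σ.a ≤ σ.b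
  hbs : σ.b ≤ σ.s

/-- step relation -/
structure Step (μ H : Measure X) (φ : X → ℝ) (W : ℕ → ℕ → Set X) (m : ℝ) (k : ℕ)
    (σ τ : St X) : Prop where
  inv : StInv μ φ τ
  ha : τ.a = σ.s
  hs : τ.s = τ.b + ∑ i ∈ Finset.range σ.N, defi μ σ.G i
  hb : σ.s < τ.b
  hb1 : 1 ≤ τ.b
  hbk : (k : ℝ) ≤ τ.b
  h4 : 4 * σ.b ≤ τ.b
  cov : φ ⁻¹' Ioo σ.s τ.b ⊆ (⋃ j, W k j)ᶜ ∪ ⋃ i : Fin τ.N, τ.G i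
  low : ENNReal.ofReal ((m - (1/2)^(k+1)) * τ.b) ≤ H ((⋃ j, W (k+1) j)ᶜ ∩ {x | φ x ≤ τ.b})
  up : ∀ v, τ.b ≤ v →
    H ((⋃ j, W (k+1) j)ᶜ ∩ {x | φ x ≤ v}) ≤ ENNReal.ofReal ((m + (1/2)^(k+1)) * v)
  lev : ∀ v ∈ Icc τ.b τ.s, H (φ ⁻¹' {v}) ≤ ENNReal.ofReal ((1/2)^(k+1) / (σ.N + 1) * τ.b)

lemma exists_step (μ H : Measure X) (φ : X → ℝ) (hφ : Continuous φ)
    (hfin : ∀ w, μ (φ ⁻¹' Iio w) < ⊤)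
    (hlev : ∀ (N : ℕ) (ε : ℝ), 0 < ε → ∀ᶠ b : ℝ in atTop, ∀ v ∈ Icc b (b + N),
      H (φ ⁻¹' {v}) ≤ ENNReal.ofReal (ε * b))
    (W : ℕ → ℕ → Set X) (hWo : ∀ k j, IsOpen (W k j))
    (hWd : ∀ k, Pairwise (fun i j => Disjoint (W k i) (W k j))) (hW1 : ∀ k j, μ (W k j) ≤ 1)
    (m : ℝ)
    (hup : ∀ k, ∀ᶠ v : ℝ in atTop,
      H ((⋃ j, W k j)ᶜ ∩ {x | φ x ≤ v}) ≤ ENNReal.ofReal ((m + (1/2)^k) * v))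
    (hlow : ∀ k, ∃ᶠ v : ℝ in atTop,
      ENNReal.ofReal ((m - (1/2)^k) * v) ≤ H ((⋃ j, W k j)ᶜ ∩ {x | φ x ≤ v}))
    (k : ℕ) (σ : St X) (hσ : StInv μ φ σ) : ∃ τ, Step μ H φ W m k σ τ := by
  have e1 := hlev σ.N ((1/2)^(k+1) / (σ.N + 1)) (by positivity)
  obtain ⟨v0, hv0⟩ := eventually_atTop.1 (hup (k+1))
  obtain ⟨b, hb, ⟨⟨⟨⟨⟨hb1, hb2⟩, hb3⟩, hb4⟩, hb5⟩, hb6⟩⟩ := ((hlow (k+1)).and_eventually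
    (((((e1.and (eventually_gt_atTop σ.s)).and (eventually_ge_atTop 1)).and
      (eventually_ge_atTop (4 * σ.b))).and (eventually_ge_atTop v0)).and
      (eventually_ge_atTop (k:ℝ)))).exists
  have hdef : ∀ i, 0 ≤ defi μ σ.G i ∧ defi μ σ.G i ≤ 1 := by
    intro i
    have := ENNReal.toReal_mono (by simp) (hσ.h1 i)
    simp only [defi, ENNReal.toReal_one] at this ⊢
    constructor
    · linarith
    · linarith [ENNReal.toReal_nonneg (a := μ (σ.G i))]
  have hsum0 : 0 ≤ ∑ i ∈ Finset.range σ.N, defi μ σ.G i := Finset.sum_nonneg fun i _ => (hdef i).1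
  have hsumN : ∑ i ∈ Finset.range σ.N, defi μ σ.G i ≤ σ.N := by
    calc _ ≤ ∑ i ∈ Finset.range σ.N, (1:ℝ) := Finset.sum_le_sum fun i _ => (hdef i).2
      _ = _ := by simp
  obtain ⟨N, G, g1, g2, g3, g4, g5⟩ := grouping μ (W k) (hWo k) (hWd k) (hW1 k)
    (φ ⁻¹' Ioo σ.s b) (isOpen_Ioo.preimage hφ)
    ((measure_mono (preimage_mono Ioo_subset_Iio_self)).trans_lt (hfin b))
  refine ⟨⟨σ.s, b, b + ∑ i ∈ Finset.range σ.N, defi μ σ.G i, N, G⟩,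
    ⟨g1, g2, g3, g4, hb2.le, by simpa using hsum0⟩, rfl, rfl, hb2, hb3, hb6, hb4, g5, hb,
    fun v hv => hv0 v (hb5.trans hv), fun v hv => hb1 v ⟨hv.1, hv.2.trans ?_⟩⟩
  simpa using hsumN

lemma exists_seq {α : Type*} (P : α → Prop) (R : ℕ → α → α → Prop) (x0 : α) (h0 : P x0)
    (h : ∀ k x, P x → ∃ y, R k x y) (hP : ∀ k x y, R k x y → P y) :
    ∃ f : ℕ → α, f 0 = x0 ∧ (∀ k, P (f k)) ∧ ∀ k, R k (f k) (f (k+1)) := by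
  choose g hg using h
  let F : ℕ → {x // P x} := fun k => Nat.rec ⟨x0, h0⟩
    (fun k x => ⟨g k x.1 x.2, hP k _ _ (hg k x.1 x.2)⟩) k
  exact ⟨fun k => (F k).1, rfl, fun k => (F k).2, fun k => hg k _ _⟩


lemma shell_cover (t : ℕ → ℝ) (v : ℝ) (N : ℕ) (h0 : t 0 ≤ v) (hN : v ≤ t N) :
    (∃ i : Fin (N + 1), v = t i) ∨ ∃ i : Fin N, v ∈ Ioo (t i) (t (i + 1)) := by
  induction N with
  | zero => exact Or.inl ⟨0, le_antisymm hN h0⟩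
  | succ N ih =>
    by_cases h : v ≤ t N
    · rcases ih h with ⟨i, hi⟩ | ⟨i, hi⟩
      · exact Or.inl ⟨i.castSucc, hi⟩
      · exact Or.inr ⟨i.castSucc, hi⟩
    · rcases eq_or_lt_of_le hN with h' | h'
      · exact Or.inl ⟨Fin.last _, by simpa using h'⟩
      · exact Or.inr ⟨Fin.last _, by simpa using ⟨not_le.1 h, h'⟩⟩

lemma le_ofReal_sub_of_add {x y : ENNReal} {p q : ℝ} (hq : ENNReal.ofReal q ≤ y)
    (h : x + y ≤ ENNReal.ofReal p) : x ≤ ENNReal.ofReal (p - q) := by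
  have h1 : x + ENNReal.ofReal q ≤ ENNReal.ofReal p := le_trans (by gcongr) h
  rcases le_total 0 q with h0 | h0
  · rw [ENNReal.ofReal_sub _ h0]
    exact ENNReal.le_sub_of_add_le_right (by simp) h1
  · exact (le_self_add.trans h1).trans (ENNReal.ofReal_le_ofReal (by linarith))

theorem core_exists (μ H : Measure X) (φ : X → ℝ) (hφ : Continuous φ) (hφ0 : ∀ x, 0 ≤ φ x)
    (hvol : ∀ u w : ℝ, 0 ≤ u → u ≤ w → μ (φ ⁻¹' Ioo u w) = ENNReal.ofReal (w - u))
    (hfin : ∀ w, μ (φ ⁻¹' Iio w) < ⊤)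
    (hlev0 : ∀ v, μ (φ ⁻¹' {v}) = 0)
    (hlev : ∀ (N : ℕ) (ε : ℝ), 0 < ε → ∀ᶠ b : ℝ in atTop, ∀ v ∈ Icc b (b + N),
      H (φ ⁻¹' {v}) ≤ ENNReal.ofReal (ε * b))
    (W : ℕ → ℕ → Set X) (hWo : ∀ k j, IsOpen (W k j))
    (hWd : ∀ k, Pairwise (fun i j => Disjoint (W k i) (W k j))) (hW1 : ∀ k j, μ (W k j) ≤ 1)
    (hW0 : ∀ k, μ (⋃ j, W k j)ᶜ = 0)
    (hHfin : ∀ k v, H ((⋃ j, W k j)ᶜ ∩ {x | φ x ≤ v}) < ⊤)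
    (m : ℝ) (hm : 0 ≤ m)
    (hup : ∀ k, ∀ᶠ v : ℝ in atTop,
      H ((⋃ j, W k j)ᶜ ∩ {x | φ x ≤ v}) ≤ ENNReal.ofReal ((m + (1/2)^k) * v))
    (hlow : ∀ k, ∃ᶠ v : ℝ in atTop,
      ENNReal.ofReal ((m - (1/2)^k) * v) ≤ H ((⋃ j, W k j)ᶜ ∩ {x | φ x ≤ v})) :
    ∃ (ι : Type) (_ : Countable ι) (U : ι → Set X), (∀ i, IsOpen (U i)) ∧
      Pairwise (fun i j => Disjoint (U i) (U j)) ∧ (∀ i, μ (U i) = 1) ∧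
      μ (⋃ i, U i)ᶜ = 0 ∧ ∀ δ > 0, ∀ᶠ v : ℝ in atTop,
        H ((⋃ i, U i)ᶜ ∩ {x | φ x ≤ v}) ≤ ENNReal.ofReal ((m + δ) * v) := by
  obtain ⟨f, hf0, hinv, hst⟩ := exists_seq (StInv μ φ) (Step μ H φ W m)
    ⟨-1, -1, -1, 0, fun _ => ∅⟩ ⟨by simp, by simp, by simp, by simp, le_rfl, le_rfl⟩
    (exists_step μ H φ hφ hfin hlev W hWo hWd hW1 m hup hlow) (fun k x y h => h.inv)
  have hdef : ∀ k i, 0 ≤ defi μ (f k).G i := by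
    intro k i
    have := ENNReal.toReal_mono (by simp) ((hinv k).h1 i)
    simp only [defi, ENNReal.toReal_one] at this ⊢
    linarith
  obtain ⟨t, ht⟩ : ∃ t : ℕ → ℕ → ℝ, ∀ k i, t k i = (f (k+1)).b + ∑ j ∈ Finset.range i, defi μ (f k).G j :=
    ⟨_, fun _ _ => rfl⟩
  have ht0 : ∀ k, t k 0 = (f (k+1)).b := by intro k; simp [ht]
  have htN : ∀ k, t k (f k).N = (f (k+1)).s := by intro k; rw [ht, (hst k).hs]
  have hts : ∀ k i, t k (i+1) = t k i + defi μ (f k).G i := by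
    intro k i; rw [ht, ht, Finset.sum_range_succ]; ring
  have htm : ∀ k, Monotone (t k) := fun k => monotone_nat_of_le_succ fun i => by
    rw [hts]; linarith [hdef k i]
  have hsm : Monotone (fun k => (f k).s) := monotone_nat_of_le_succ fun k =>
    (hst k).hb.le.trans (hinv (k+1)).hbs
  have hsm' : ∀ k l, k < l → (f k).s ≤ (f l).a ∧ (f k).s < (f l).b := by
    intro k l hkl
    obtain ⟨l, rfl⟩ : ∃ l', l = l' + 1 := ⟨l - 1, by omega⟩
    have : (f k).s ≤ (f l).s := hsm (by omega)
    exact ⟨by rw [(hst l).ha]; exact this, this.trans_lt (hst l).hb⟩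
  have hbpos : ∀ k, 1 ≤ (f (k+1)).b := fun k => (hst k).hb1
  -- the regions
  obtain ⟨U, hU⟩ : ∃ U : (Σ k, Fin (f k).N) → Set X, ∀ k i, U ⟨k, i⟩ =
      (f k).G i ∪ φ ⁻¹' Ioo (t k i) (t k (i+1)) :=
    ⟨fun p => (f p.1).G p.2 ∪ φ ⁻¹' Ioo (t p.1 p.2) (t p.1 (p.2+1)), fun _ _ => rfl⟩
  have hrange : ∀ k (i : Fin (f k).N), (f (k+1)).b ≤ t k i ∧ t k (i+1) ≤ (f (k+1)).s := by
    intro k i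
    rw [← ht0, ← htN]
    exact ⟨htm k (by omega), htm k (by omega)⟩
  have hloc1 : ∀ k x, x ∈ (⋃ p, U p)ᶜ → (f (k+1)).b ≤ φ x → φ x ≤ (f (k+1)).s →
      x ∈ ⋃ i : Fin ((f k).N + 1), φ ⁻¹' {t k i} := by
    intro k x hx h1 h2
    rw [← ht0] at h1
    rw [← htN] at h2
    rcases shell_cover (t k) (φ x) _ h1 h2 with ⟨i, hi⟩ | ⟨i, hi⟩
    · exact mem_iUnion.2 ⟨i, hi⟩
    · exact (hx (mem_iUnion.2 ⟨⟨k, i⟩, by rw [hU]; exact Or.inr hi⟩)).elim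
  have hloc2 : ∀ k x, x ∈ (⋃ p, U p)ᶜ → (f k).s < φ x → φ x < (f (k+1)).b →
      x ∈ (⋃ j, W k j)ᶜ := by
    intro k x hx h1 h2
    rcases (hst k).cov ⟨h1, h2⟩ with h | h
    · exact h
    · obtain ⟨i, hi⟩ := mem_iUnion.1 h
      exact (hx (mem_iUnion.2 ⟨⟨k+1, i⟩, by rw [hU]; exact Or.inl hi⟩)).elim
  have hs0 : (f 0).s = -1 := by rw [hf0]
  have hbk : ∀ k : ℕ, (k:ℝ) ≤ (f (k+1)).b := fun k => (hst k).hbk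
  have hbm : Monotone (fun k => (f (k+1)).b) := monotone_nat_of_le_succ fun k =>
    ((hinv (k+1)).hbs.trans (hst (k+1)).hb.le)
  obtain ⟨S, hS⟩ : ∃ S, S = (⋃ p, U p)ᶜ := ⟨_, rfl⟩
  have hT : ∀ k, H (⋃ i : Fin ((f k).N + 1), φ ⁻¹' {t k i}) ≤
      ENNReal.ofReal ((1/2)^(k+1) * (f (k+1)).b) := by
    intro k
    calc _ ≤ ∑ i : Fin ((f k).N + 1), H (φ ⁻¹' {t k i}) := measure_iUnion_fintype_le _ _
      _ ≤ ∑ i : Fin ((f k).N + 1), ENNReal.ofReal ((1/2)^(k+1) / ((f k).N + 1) * (f (k+1)).b) := by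
        refine Finset.sum_le_sum fun i _ => (hst k).lev _ ?_
        rw [← ht0, ← htN]
        exact ⟨htm k (by omega), htm k (by omega)⟩
      _ = _ := by
        rw [Finset.sum_const, nsmul_eq_mul, Finset.card_univ, Fintype.card_fin,
          ← ENNReal.ofReal_natCast, ← ENNReal.ofReal_mul (by positivity)]
        congr 1
        push_cast
        field_simp
  have hmeas : ∀ v, MeasurableSet {x | φ x ≤ v} := fun v =>
    (isClosed_Iic.preimage hφ).measurableSet
  have hbound : ∀ k r, (f (k+1)).b ≤ r → H (S ∩ {x | φ x < (f (k+2)).b} ∩ {x | φ x ≤ r}) ≤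
      H (S ∩ {x | φ x < (f (k+1)).b}) + ENNReal.ofReal ((1/2)^(k+1) * (f (k+1)).b) +
      ENNReal.ofReal ((m + (1/2)^(k+1)) * r - (m - (1/2)^(k+1)) * (f (k+1)).b) := by
    intro k r hr
    have hsub : S ∩ {x | φ x < (f (k+2)).b} ∩ {x | φ x ≤ r} ⊆
        (S ∩ {x | φ x < (f (k+1)).b}) ∪ (⋃ i : Fin ((f k).N + 1), φ ⁻¹' {t k i}) ∪
        ((⋃ j, W (k+1) j)ᶜ ∩ {x | φ x ≤ r}) \ {x | φ x ≤ (f (k+1)).b} := by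
      rintro x ⟨⟨hx, hx2⟩, hx3⟩
      simp only [mem_ofPred_eq] at hx2 hx3
      by_cases h1 : φ x < (f (k+1)).b
      · exact Or.inl (Or.inl ⟨hx, h1⟩)
      · rw [not_lt] at h1
        by_cases h2 : φ x ≤ (f (k+1)).s
        · exact Or.inl (Or.inr (hloc1 k x (hS ▸ hx) h1 h2))
        · rw [not_le] at h2
          refine Or.inr ⟨⟨hloc2 (k+1) x (hS ▸ hx) h2 hx2, hx3⟩, ?_⟩
          simp only [mem_ofPred_eq, not_le]
          exact (hinv (k+1)).hbs.trans_lt h2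
    refine (measure_mono hsub).trans ((measure_union_le _ _).trans
      (add_le_add ((measure_union_le _ _).trans (add_le_add le_rfl (hT k))) ?_))
    refine le_ofReal_sub_of_add (hst k).low ?_
    refine le_trans (le_of_eq ?_) ((hst k).up r hr)
    rw [add_comm, ← measure_inter_add_sdiff ((⋃ j, W (k+1) j)ᶜ ∩ {x | φ x ≤ r}) (hmeas (f (k+1)).b)]
    congr 2
    ext x
    simp only [mem_inter_iff, mem_ofPred_eq]
    constructor
    · rintro ⟨h1, h2⟩
      exact ⟨⟨h1, h2.trans hr⟩, h2⟩
    · rintro ⟨⟨h1, h2⟩, h3⟩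
      exact ⟨h1, h3⟩
  obtain ⟨C, hC6, hC⟩ : ∃ C : ℝ, 6 ≤ C ∧ ∀ k, H (S ∩ {x | φ x < (f (k+1)).b}) ≤
      ENNReal.ofReal ((m + C * (1/2)^(k+1)) * (f (k+1)).b) := by
    have hlt : H (S ∩ {x | φ x < (f (0+1)).b}) < ⊤ := by
      refine (measure_mono ?_).trans_lt (hHfin 0 (f (0+1)).b)
      rintro x ⟨hx, hx2⟩
      exact ⟨hloc2 0 x (hS ▸ hx) (by rw [hs0]; linarith [hφ0 x]) hx2,
        show φ x ≤ _ from le_of_lt (show φ x < _ from hx2)⟩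
    refine ⟨max 6 (2 * (H (S ∩ {x | φ x < (f (0+1)).b})).toReal), le_max_left _ _, fun k => ?_⟩
    have h6 := le_max_left 6 (2 * (H (S ∩ {x | φ x < (f (0+1)).b})).toReal)
    have h7 := le_max_right 6 (2 * (H (S ∩ {x | φ x < (f (0+1)).b})).toReal)
    generalize max 6 (2 * (H (S ∩ {x | φ x < (f (0+1)).b})).toReal) = C at h6 h7
    induction k with
    | zero =>
      rw [← ENNReal.ofReal_toReal hlt.ne]
      apply ENNReal.ofReal_le_ofReal
      have := hbpos 0
      have h8 : (H (S ∩ {x | φ x < (f (0+1)).b})).toReal ≤ m + C * (1/2)^(0+1) := by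
        norm_num at h7 ⊢; linarith
      have h9 : 0 ≤ m + C * (1/2)^(0+1) := by positivity
      nlinarith
    | succ k ih =>
      have h4 := (hst (k+1)).h4
      have hb := hbpos k
      have hbd := hbound k (f (k+2)).b (by simpa using hbm (Nat.le_succ k))
      rw [inter_assoc, inter_eq_left.2 (show {x | φ x < (f (k+2)).b} ⊆ {x | φ x ≤ (f (k+2)).b} from
        fun x hx => show φ x ≤ _ from le_of_lt (show φ x < _ from hx))] at hbd
      have he : (0:ℝ) < (1/2)^(k+1) := by positivity
      have he2 : ((1/2:ℝ))^(k+1+1) = (1/2)^(k+1) / 2 := by rw [pow_succ]; ring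
      rw [he2]
      generalize ((1/2:ℝ))^(k+1) = e at *
      refine hbd.trans ((add_le_add (add_le_add ih le_rfl) le_rfl).trans ?_)
      change 4 * (f (k+1)).b ≤ (f (k+2)).b at h4
      change _ ≤ ENNReal.ofReal ((m + C * (e/2)) * (f (k+2)).b)
      generalize (f (k+1)).b = b at *
      generalize (f (k+2)).b = r at *
      have hr : 0 ≤ r - b := by linarith
      have q1 : 0 ≤ (m + C * e) * b := by positivity
      have q2 : 0 ≤ e * b := by positivity
      have q3 : 0 ≤ (m + e) * r - (m - e) * b := by nlinarith [mul_nonneg hm hr]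
      rw [← ENNReal.ofReal_add q1 q2, ← ENNReal.ofReal_add (add_nonneg q1 q2) q3]
      apply ENNReal.ofReal_le_ofReal
      have q4 : 0 ≤ (C + 2) * (e * (r - 4 * b)) := by
        have : 0 ≤ r - 4 * b := by linarith
        positivity
      have q5 : 0 ≤ (C - 6) * (e * r) := by
        have : 0 ≤ C - 6 := by linarith
        have : 0 ≤ r := by linarith
        positivity
      nlinarith
  refine ⟨_, inferInstance, U, ?_, ?_, ?_, ?_, ?_⟩
  · rintro ⟨k, i⟩
    rw [hU]
    exact ((hinv k).hG i).union (isOpen_Ioo.preimage hφ)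
  · -- disjointness
    have key : ∀ k l (i : Fin (f k).N) (j : Fin (f l).N), k < l →
        Disjoint (U ⟨k, i⟩) (U ⟨l, j⟩) := by
      intro k l i j hkl
      rw [Set.disjoint_left]
      intro x hx hy
      rw [hU] at hx hy
      have r1 := hrange k i
      have r2 := hrange l j
      have hl1 := hsm' k l hkl
      have hl2 := hsm' (k+1) (l+1) (by omega)
      have hb1 := (hinv k).hbs
      have hb2 := (hinv l).hbs
      have hb3 := (hst l).hb
      rcases hx with hx | hx <;> rcases hy with hy | hy
      · have := ((hinv k).hA _ hx).2
        have := ((hinv l).hA _ hy).1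
        linarith
      · have := ((hinv k).hA _ hx).2
        have := hy.1
        linarith
      · have q1 := ((hinv l).hA _ hy).1
        have q2 := ((hinv l).hA _ hy).2
        have q3 := hx.1
        have q4 := hx.2
        rcases Nat.eq_or_lt_of_le (Nat.succ_le_of_lt hkl) with h | h
        · subst h
          simp only [Nat.succ_eq_add_one] at *
          linarith
        · have := (hsm' (k+1) l h).1
          linarith
      · have q3 := hx.2
        have q4 := hy.1
        linarith
    rintro ⟨k, i⟩ ⟨l, j⟩ hne
    rcases lt_trichotomy k l with h | h | h
    · exact key k l i j h
    · subst h
      have hij : (i:ℕ) ≠ j := fun h => hne (by rw [Fin.ext h])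
      rw [Set.disjoint_left]
      intro x hx hy
      rw [hU] at hx hy
      have r1 := hrange k i
      have r2 := hrange k j
      have hb1 := (hinv k).hbs
      have hb3 := (hst k).hb
      rcases hx with hx | hx <;> rcases hy with hy | hy
      · exact Set.disjoint_left.1 ((hinv k).hd _ _ hij) hx hy
      · have := ((hinv k).hA _ hx).2
        have := hy.1
        linarith
      · have := ((hinv k).hA _ hy).2
        have := hx.1
        linarith
      · have q1 := hx.1
        have q2 := hx.2
        have q3 := hy.1
        have q4 := hy.2
        rcases lt_or_gt_of_ne hij with h | h
        · have := htm k (show (i:ℕ) + 1 ≤ j by omega)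
          linarith
        · have := htm k (show (j:ℕ) + 1 ≤ i by omega)
          linarith
    · exact (key l k j i h).symm
  · -- volume
    rintro ⟨k, i⟩
    rw [hU, measure_union _ (isOpen_Ioo.preimage hφ).measurableSet,
      hvol _ _ (by linarith [(hrange k i).1, hbpos k]) (htm k (by omega)), hts]
    · have hle := (hinv k).h1 i
      have hne : μ ((f k).G i) ≠ ⊤ := (hle.trans_lt (by simp)).ne
      have := ENNReal.toReal_mono (by simp) hle
      simp only [ENNReal.toReal_one] at this
      nth_rewrite 1 [← ENNReal.ofReal_toReal hne]
      rw [← ENNReal.ofReal_add (by positivity) (by linarith [hdef k i])]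
      simp [defi]
    · rw [Set.disjoint_left]
      intro x hx hy
      have := ((hinv k).hA _ hx).2
      have := hy.1
      linarith [(hrange k i).1, (hinv k).hbs, (hst k).hb]
  · -- null
    have hsub : (⋃ p, U p)ᶜ ⊆ ⋃ k, ((⋃ j, W k j)ᶜ ∪ ⋃ i : Fin ((f k).N + 1), φ ⁻¹' {t k i}) := by
      intro x hx
      have hex : ∃ j, φ x ≤ (f j).s := by
        obtain ⟨j, hj⟩ := exists_nat_ge (φ x)
        exact ⟨j+1, hj.trans ((hbk j).trans (hinv (j+1)).hbs)⟩
      classical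
      have h1 := Nat.find_spec hex
      have h2 : ∀ j < Nat.find hex, ¬ _ := fun j hj => Nat.find_min hex hj
      generalize Nat.find hex = j at h1 h2
      cases j with
      | zero => rw [hs0] at h1; linarith [hφ0 x]
      | succ k =>
        have h3 := not_le.1 (h2 k (Nat.lt_succ_self k))
        rw [mem_iUnion]
        refine ⟨k, ?_⟩
        by_cases h4 : φ x < (f (k+1)).b
        · exact Or.inl (hloc2 k x hx h3 h4)
        · exact Or.inr (hloc1 k x hx (not_lt.1 h4) h1)
    refine measure_mono_null hsub (measure_iUnion_null fun k => measure_union_null (hW0 k)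
      (measure_iUnion_null fun i => hlev0 _))
  · intro δ hδ
    obtain ⟨K, hK⟩ := exists_pow_lt_of_lt_one (show 0 < δ / (C + 3) by positivity)
      (show (1/2:ℝ) < 1 by norm_num)
    filter_upwards [eventually_ge_atTop (f (K+1)).b] with v hv
    have hex : ∃ j, v < (f (j+1)).b := by
      obtain ⟨j, hj⟩ := exists_nat_gt v
      exact ⟨j, hj.trans_le (hbk j)⟩
    classical
    have h1 := Nat.find_spec hex
    have h2 : ∀ j < Nat.find hex, ¬ _ := fun j hj => Nat.find_min hex hj
    generalize Nat.find hex = j at h1 h2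
    have hKj : K < j := by
      by_contra h
      have := hbm (not_lt.1 h)
      simp only at this
      linarith
    obtain ⟨k, rfl⟩ : ∃ k, j = k + 1 := ⟨j - 1, by omega⟩
    have h3 := not_lt.1 (h2 k (Nat.lt_succ_self k))
    have hbd := hbound k v h3
    rw [inter_assoc, inter_eq_right.2 (show {x | φ x ≤ v} ⊆ {x | φ x < (f (k+2)).b} from
        fun x hx => show φ x < _ from lt_of_le_of_lt (show φ x ≤ _ from hx) h1)] at hbd
    rw [← hS]
    have he : (0:ℝ) < (1/2)^(k+1) := by positivity
    have hek : (1/2:ℝ)^(k+1) ≤ (1/2)^K := pow_le_pow_of_le_one (by norm_num) (by norm_num) (by omega)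
    have hCk := hC k
    have hb := hbpos k
    generalize ((1/2:ℝ))^(k+1) = e at *
    refine hbd.trans ((add_le_add (add_le_add hCk le_rfl) le_rfl).trans ?_)
    generalize (f (k+1)).b = b at *
    have hr : 0 ≤ v - b := by linarith
    have q1 : 0 ≤ (m + C * e) * b := by positivity
    have q2 : 0 ≤ e * b := by positivity
    have q3 : 0 ≤ (m + e) * v - (m - e) * b := by nlinarith [mul_nonneg hm hr]
    rw [← ENNReal.ofReal_add q1 q2, ← ENNReal.ofReal_add (add_nonneg q1 q2) q3]
    apply ENNReal.ofReal_le_ofReal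
    have q4 : 0 ≤ (C + 2) * (e * (v - b)) := by positivity
    have q6 : (C + 3) * e ≤ δ := by
      have := (hek.trans hK.le)
      rw [le_div_iff₀ (by positivity)] at this
      linarith
    have q5 : (C + 3) * e * v ≤ δ * v := by
      have : 0 ≤ v := by linarith
      gcongr
    nlinarith

end core

section conc

lemma assemble (n : ℕ) {ι : Type} [Countable ι] [Infinite ι] (U : ι → Set (EuclideanSpace ℝ (Fin n)))
    (ho : ∀ i, IsOpen (U i)) (hd : Pairwise (fun i j => Disjoint (U i) (U j)))
    (h1 : ∀ i, volume (U i) = 1) (h0 : volume (⋃ i, U i)ᶜ = 0) :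
    ∃ R, IsUnitPartition n R ∧ (⋃ j, frontier (R j)) ⊆ (⋃ i, U i)ᶜ := by
  obtain ⟨hden⟩ := nonempty_denumerable_iff.2 ⟨‹Countable ι›, ‹Infinite ι›⟩
  let e : ℕ ≃ ι := (Denumerable.eqv ι).symm
  obtain ⟨O, hO⟩ : ∃ O, O = ⋃ i, U i := ⟨_, rfl⟩
  have hOm : MeasurableSet O := hO ▸ (isOpen_iUnion ho).measurableSet
  have hsub : ∀ j, U (e j) ⊆ O := fun j => hO ▸ subset_iUnion U (e j)
  have hcov : (⋃ j, U (e j)) = O := by rw [hO]; exact e.surjective.iUnion_comp U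
  rw [← hO] at h0 ⊢
  have hde : ∀ i j, i ≠ j → Disjoint (U (e i)) (U (e j)) := fun i j h => hd (e.injective.ne h)
  refine ⟨fun j => if j = 0 then U (e j) ∪ Oᶜ else U (e j), ⟨?_, ?_, ?_, ?_⟩, ?_⟩
  · intro i j hij
    have hc : ∀ j, Disjoint (U (e j)) Oᶜ := fun j => disjoint_compl_right.mono_left (hsub j)
    simp only [Function.onFun]
    split_ifs with h2 h3 h3
    · omega
    · exact Disjoint.union_left (hde i j hij) (hc j).symm
    · exact Disjoint.union_right (hde i j hij) (hc i)
    · exact hde i j hij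
  · intro j
    dsimp only
    split_ifs
    · exact (ho _).measurableSet.union hOm.compl
    · exact (ho _).measurableSet
  · intro j
    dsimp only
    split_ifs
    · refine le_antisymm ((measure_union_le _ _).trans (by rw [h0, h1, add_zero])) ?_
      rw [← h1 (e j)]
      exact measure_mono subset_union_left
    · exact h1 _
  · rw [eq_univ_iff_forall]
    intro x
    rw [mem_iUnion]
    by_cases hx : x ∈ O
    · rw [← hcov] at hx
      obtain ⟨j, hj⟩ := mem_iUnion.1 hx
      refine ⟨j, ?_⟩
      split_ifs
      · exact Or.inl hj
      · exact hj
    · exact ⟨0, by simp [hx]⟩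
  · intro x hx hxO
    obtain ⟨j, hj⟩ := mem_iUnion.1 hx
    rw [← hcov] at hxO
    obtain ⟨i, hi⟩ := mem_iUnion.1 hxO
    have key : ∀ A : Set (EuclideanSpace ℝ (Fin n)), (U (e i) ⊆ A ∨ Disjoint (U (e i)) A) →
        x ∉ frontier A := by
      rintro A (h | h) hf
      · exact hf.2 (mem_interior.2 ⟨_, h, ho _, hi⟩)
      · exact Set.disjoint_left.1 (h.closure_right (ho _)) hi hf.1
    refine key _ ?_ hj
    by_cases hij : i = j
    · left
      subst hij
      dsimp only
      split_ifs
      · exact subset_union_left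
      · exact le_rfl
    · right
      dsimp only
      split_ifs
      · exact Disjoint.union_right (hde i j hij) (disjoint_compl_right.mono_left (hsub i))
      · exact hde i j hij

lemma frontier_union_eq (n : ℕ) (R : ℕ → Set (EuclideanSpace ℝ (Fin n))) (h : IsUnitPartition n R) :
    (⋃ j, interior (R j))ᶜ = ⋃ j, frontier (R j) := by
  obtain ⟨hd, -, -, hc⟩ := h
  ext x
  simp only [mem_compl_iff, mem_iUnion, not_exists]
  constructor
  · intro hx
    obtain ⟨j, hj⟩ := mem_iUnion.1 (hc ▸ mem_univ x)
    exact ⟨j, subset_closure hj, hx j⟩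
  · rintro ⟨j, hj⟩ i hi
    by_cases hij : i = j
    · subst hij; exact hj.2 hi
    · have : Disjoint (interior (R i)) (R j) := (hd hij).mono_left interior_subset
      exact Set.disjoint_left.1 (this.closure_right isOpen_interior) hi hj.1

lemma volume_null_of_hausdorff (n : ℕ) (S : Set (EuclideanSpace ℝ (Fin n)))
    (h : ∀ r : ℕ, μH[(n : ℝ) - 1] (S ∩ closedBall 0 r) < ⊤) : volume S = 0 := by
  have h1 : S = ⋃ r : ℕ, S ∩ closedBall 0 r := by
    rw [← inter_iUnion, iUnion_closedBall_nat, inter_univ]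
  rw [h1]
  refine measure_iUnion_null fun r => ?_
  have h2 := (Measure.hausdorffMeasure_zero_or_top (show (n:ℝ) - 1 < n by linarith)
    (S ∩ closedBall 0 r)).resolve_right (h r).ne
  have h3 : (μH[(n:ℝ)] : Measure (EuclideanSpace ℝ (Fin n))).IsAddHaarMeasure := by
    have := isAddHaarMeasure_hausdorffMeasure (E := EuclideanSpace ℝ (Fin n))
    simpa using this
  rw [Measure.isAddLeftInvariant_eq_smul (volume : Measure (EuclideanSpace ℝ (Fin n))) (μH[(n:ℝ)])]
  simp [h2]

lemma half_sphere_finite (n : ℕ) (hn : 2 ≤ n) (v : EuclideanSpace ℝ (Fin n)) (hv : ‖v‖ = 1) :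
    μH[(n : ℝ) - 1] {x : EuclideanSpace ℝ (Fin n) | ‖x‖ = 1 ∧ inner ℝ v x ≤ 0} < ⊤ := by
  have hsub : {x : EuclideanSpace ℝ (Fin n) | ‖x‖ = 1 ∧ inner ℝ v x ≤ 0} ⊆
      (fun w : (Submodule.span ℝ {v})ᗮ => stereoInvFunAux v (w : EuclideanSpace ℝ (Fin n))) ''
        closedBall 0 2 := by
    rintro x ⟨hx, hx2⟩
    have hne : x ≠ v := by
      rintro rfl
      rw [real_inner_self_eq_norm_sq, hx] at hx2
      norm_num at hx2
    refine ⟨stereoToFun v x, ?_, ?_⟩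
    · rw [mem_closedBall_zero_iff, stereoToFun_apply, norm_smul, innerSL_apply_apply]
      have h1 : ‖(Submodule.span ℝ {v})ᗮ.orthogonalProjectionOnto x‖ ≤ 1 := by
        rw [← hx]; exact Submodule.norm_orthogonalProjectionOnto_apply_le _ _
      have h2 : ‖2 / (1 - inner ℝ v x)‖ ≤ 2 := by
        rw [Real.norm_of_nonneg (div_nonneg (by norm_num) (by linarith))]
        rw [div_le_iff₀ (by linarith)]
        linarith
      calc _ ≤ (2:ℝ) * 1 := by gcongr
        _ = 2 := by norm_num
    · have := stereo_left_inv hv (x := ⟨x, by simpa using hx⟩) hne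
      exact congrArg Subtype.val this
  refine (measure_mono hsub).trans_lt ?_
  have hcd : ContDiff ℝ 1 (fun w : (Submodule.span ℝ {v})ᗮ =>
      stereoInvFunAux v (w : EuclideanSpace ℝ (Fin n))) :=
    by
    have h := (Submodule.subtypeL (Submodule.span ℝ {v})ᗮ).contDiff (n := 1)
    exact (contDiff_stereoInvFunAux (v := v)).comp h
  have hcomp : IsCompact (closedBall (0 : (Submodule.span ℝ {v})ᗮ) 2) := isCompact_closedBall _ _
  obtain ⟨K, hK⟩ := (hcd.locallyLipschitz.locallyLipschitzOn
    (s := closedBall 0 2)).exists_lipschitzOnWith_of_compact hcomp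
  have hn1 : (0:ℝ) ≤ (n:ℝ) - 1 := by
    have : (2:ℝ) ≤ n := by exact_mod_cast hn
    linarith
  refine (hK.hausdorffMeasure_image_le hn1).trans_lt ?_
  have hfr : Module.finrank ℝ (Submodule.span ℝ {v})ᗮ = n - 1 := by
    have : Fact (Module.finrank ℝ (EuclideanSpace ℝ (Fin n)) = (n - 1) + 1) := ⟨by simp; omega⟩
    exact Submodule.finrank_orthogonal_span_singleton (by rintro rfl; simp at hv)
  have hH := isAddHaarMeasure_hausdorffMeasure (E := (Submodule.span ℝ {v})ᗮ)
  rw [hfr, Nat.cast_sub (by omega), Nat.cast_one] at hH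
  exact ENNReal.mul_lt_top (ENNReal.rpow_lt_top_of_nonneg hn1 (by simp)) hcomp.measure_lt_top

lemma sphere_finite (n : ℕ) (hn : 2 ≤ n) :
    μH[(n : ℝ) - 1] (sphere (0 : EuclideanSpace ℝ (Fin n)) 1) < ⊤ := by
  let v : EuclideanSpace ℝ (Fin n) := EuclideanSpace.single ⟨0, by omega⟩ 1
  have hv : ‖v‖ = 1 := by simp [v]
  have h1 := half_sphere_finite n hn v hv
  have h2 := half_sphere_finite n hn (-v) (by simpa using hv)
  refine (measure_mono ?_).trans_lt ((measure_union_le _ _).trans_lt (ENNReal.add_lt_top.2 ⟨h1, h2⟩))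
  intro x hx
  have hx : ‖x‖ = 1 := by simpa using hx
  rcases le_total (inner ℝ v x) 0 with h | h
  · exact Or.inl ⟨hx, h⟩
  · exact Or.inr ⟨hx, by simpa using h⟩

lemma sphere_meas (n : ℕ) (hn : 2 ≤ n) (r : ℝ) (hr : 0 < r) :
    μH[(n : ℝ) - 1] (sphere (0 : EuclideanSpace ℝ (Fin n)) r) =
      ENNReal.ofReal (r ^ (n - 1) *
        (μH[(n : ℝ) - 1] (sphere (0 : EuclideanSpace ℝ (Fin n)) 1)).toReal) := by
  have hn1 : (0:ℝ) ≤ (n:ℝ) - 1 := by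
    have : (2:ℝ) ≤ n := by exact_mod_cast hn
    linarith
  have h := Measure.hausdorffMeasure_smul₀ hn1 hr.ne'
    (sphere (0 : EuclideanSpace ℝ (Fin n)) 1)
  rw [smul_sphere' hr.ne', smul_zero, mul_one, Real.norm_of_nonneg hr.le] at h
  rw [h, ENNReal.ofReal_mul (by positivity), ENNReal.ofReal_toReal (sphere_finite n hn).ne,
    ENNReal.smul_def, smul_eq_mul]
  congr 1
  have : (n:ℝ) - 1 = ((n - 1 : ℕ) : ℝ) := by rw [Nat.cast_sub (by omega), Nat.cast_one]
  rw [this, NNReal.rpow_natCast, ENNReal.coe_pow, ENNReal.ofReal_pow hr.le]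
  congr 1
  rw [← Real.enorm_of_nonneg hr.le]; rfl

/-- volume of the unit ball -/
noncomputable def ubv (n : ℕ) : ℝ := (volume (ball (0 : EuclideanSpace ℝ (Fin n)) 1)).toReal

lemma ubv_pos (n : ℕ) : 0 < ubv n :=
  ENNReal.toReal_pos (measure_ball_pos _ _ one_pos).ne' measure_ball_lt_top.ne

lemma vol_cb (n : ℕ) (r : ℝ) (hr : 0 ≤ r) :
    volume (closedBall (0 : EuclideanSpace ℝ (Fin n)) r) = ENNReal.ofReal (ubv n * r ^ n) := by
  rw [Measure.addHaar_closedBall _ _ hr, mul_comm (ubv n), ENNReal.ofReal_mul (by positivity), ubv,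
    ENNReal.ofReal_toReal measure_ball_lt_top.ne]
  simp

/-- volume coordinate -/
noncomputable def vphi (n : ℕ) (x : EuclideanSpace ℝ (Fin n)) : ℝ := ubv n * ‖x‖ ^ n

/-- radius with given volume -/
noncomputable def vrad (n : ℕ) (v : ℝ) : ℝ := (v / ubv n) ^ ((1:ℝ) / n)

lemma vrad_nonneg (n : ℕ) (v : ℝ) (hv : 0 ≤ v) : 0 ≤ vrad n v :=
  Real.rpow_nonneg (div_nonneg hv (ubv_pos n).le) _

lemma vrad_spec (n : ℕ) (hn : 2 ≤ n) (v : ℝ) (hv : 0 ≤ v) : ubv n * vrad n v ^ n = v := by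
  have hc := ubv_pos n
  rw [vrad, ← Real.rpow_natCast, ← Real.rpow_mul (div_nonneg hv hc.le), one_div,
    inv_mul_cancel₀ (by positivity), Real.rpow_one]
  field_simp

lemma vrad_tendsto (n : ℕ) (hn : 2 ≤ n) : Tendsto (vrad n) atTop atTop := by
  have hc := ubv_pos n
  exact (tendsto_rpow_atTop (by positivity)).comp (tendsto_id.atTop_div_const hc)

lemma vphi_le (n : ℕ) (hn : 2 ≤ n) (r : ℝ) (hr : 0 ≤ r) :
    {x | vphi n x ≤ ubv n * r ^ n} = closedBall 0 r := by
  ext x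
  have hc := ubv_pos n
  rw [mem_closedBall_zero_iff, mem_ofPred_eq, vphi, mul_le_mul_iff_right₀ hc,
    pow_le_pow_iff_left₀ (norm_nonneg x) hr (by omega)]

lemma vphi_eq (n : ℕ) (hn : 2 ≤ n) (r : ℝ) (hr : 0 ≤ r) :
    vphi n ⁻¹' {ubv n * r ^ n} = sphere 0 r := by
  ext x
  have hc := ubv_pos n
  rw [mem_sphere_zero_iff_norm, mem_preimage, mem_singleton_iff, vphi,
    mul_right_inj' hc.ne', pow_left_inj₀ (norm_nonneg x) hr (by omega)]

lemma vphi_nonneg (n : ℕ) (x) : 0 ≤ vphi n x := by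
  have := ubv_pos n
  unfold vphi; positivity

lemma vphi_cont (n : ℕ) : Continuous (vphi n) := by unfold vphi; fun_prop

lemma vphi_lev0 (n : ℕ) (hn : 2 ≤ n) (v : ℝ) : volume (vphi n ⁻¹' {v}) = 0 := by
  rcases lt_or_ge v 0 with h | h
  · rw [show vphi n ⁻¹' {v} = ∅ from ?_, measure_empty]
    ext x
    simp only [mem_preimage, mem_singleton_iff, mem_empty_iff_false, iff_false]
    intro h'
    linarith [vphi_nonneg n x]
  · rw [← vrad_spec n hn v h, vphi_eq n hn _ (vrad_nonneg n v h)]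
    have : Nontrivial (EuclideanSpace ℝ (Fin n)) := by
      have : Nonempty (Fin n) := ⟨⟨0, by omega⟩⟩
      infer_instance
    exact Measure.addHaar_sphere _ _ _

lemma vphi_vol_le (n : ℕ) (hn : 2 ≤ n) (v : ℝ) (hv : 0 ≤ v) :
    volume {x | vphi n x ≤ v} = ENNReal.ofReal v := by
  conv_lhs => rw [← vrad_spec n hn v hv, vphi_le n hn _ (vrad_nonneg n v hv)]
  rw [vol_cb n _ (vrad_nonneg n v hv), vrad_spec n hn v hv]

lemma vphi_vol (n : ℕ) (hn : 2 ≤ n) (u w : ℝ) (hu : 0 ≤ u) (huw : u ≤ w) :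
    volume (vphi n ⁻¹' Ioo u w) = ENNReal.ofReal (w - u) := by
  have h1 : vphi n ⁻¹' Ioo u w = ({x | vphi n x ≤ w} \ {x | vphi n x ≤ u}) \ vphi n ⁻¹' {w} := by
    ext x
    simp only [mem_preimage, mem_Ioo, Set.mem_sdiff, mem_ofPred_eq, not_le, mem_singleton_iff]
    constructor
    · rintro ⟨h1, h2⟩; exact ⟨⟨h2.le, h1⟩, h2.ne⟩
    · rintro ⟨⟨h1, h2⟩, h3⟩; exact ⟨h2, lt_of_le_of_ne h1 h3⟩
  rw [h1, measure_sdiff_null (vphi_lev0 n hn w), measure_sdiff (show {x | vphi n x ≤ u} ⊆ {x | vphi n x ≤ w} from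
      fun x hx => show vphi n x ≤ w from le_trans (show vphi n x ≤ u from hx) huw)
    (isClosed_Iic.preimage (vphi_cont n)).measurableSet.nullMeasurableSet
    (by rw [vphi_vol_le n hn u hu]; simp), vphi_vol_le n hn u hu, vphi_vol_le n hn w (hu.trans huw),
    ENNReal.ofReal_sub _ hu]

lemma vphi_fin (n : ℕ) (hn : 2 ≤ n) (w : ℝ) : volume (vphi n ⁻¹' Iio w) < ⊤ := by
  refine (measure_mono (t := {x | vphi n x ≤ max w 0}) ?_).trans_lt
    (by rw [vphi_vol_le n hn _ (le_max_right _ _)]; simp)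
  intro x hx
  exact (le_of_lt (show vphi n x < w from hx)).trans (le_max_left _ _)

lemma vphi_lev (n : ℕ) (hn : 2 ≤ n) (N : ℕ) (ε : ℝ) (hε : 0 < ε) :
    ∀ᶠ b : ℝ in atTop, ∀ v ∈ Icc b (b + N),
      μH[(n : ℝ) - 1] (vphi n ⁻¹' {v}) ≤ ENNReal.ofReal (ε * b) := by
  have hc := ubv_pos n
  set σ := (μH[(n : ℝ) - 1] (sphere (0 : EuclideanSpace ℝ (Fin n)) 1)).toReal with hσ
  have hσ0 : 0 ≤ σ := ENNReal.toReal_nonneg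
  set M := 2 * σ / (ubv n * ε) + 1 with hM
  have hM0 : 0 < M := by positivity
  filter_upwards [eventually_ge_atTop (N:ℝ), eventually_ge_atTop (1:ℝ),
    eventually_ge_atTop (ubv n * M ^ n)] with b hb1 hb2 hb3 v hv
  have hv0 : 0 ≤ v := by linarith [hv.1]
  have hr0 := vrad_nonneg n v hv0
  have hr := vrad_spec n hn v hv0
  set r := vrad n v
  have hrM : M ≤ r := by
    by_contra h
    have := pow_lt_pow_left₀ (not_le.1 h) hr0 (show n ≠ 0 by omega)
    have := mul_lt_mul_of_pos_left this hc
    linarith [hv.1]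
  rw [← hr, vphi_eq n hn r hr0, sphere_meas n hn r (hM0.trans_le hrM)]
  apply ENNReal.ofReal_le_ofReal
  rw [← hσ]
  have h1 : 2 * σ ≤ ubv n * ε * r := by
    have : 2 * σ / (ubv n * ε) ≤ r := by linarith
    rw [div_le_iff₀ (by positivity)] at this
    linarith
  have h2 : r ^ n = r ^ (n-1) * r := by rw [← pow_succ]; congr 1; omega
  have h3 : r ^ (n-1) * (2 * σ) ≤ r ^ (n-1) * (ubv n * ε * r) := by gcongr
  have h4 : r ^ (n-1) * (ubv n * ε * r) = ε * v := by rw [← hr, h2]; ring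
  have h5 : ε * v ≤ ε * (2 * b) := by
    gcongr
    linarith [hv.2]
  linarith

lemma infinite_index (n : ℕ) (hn : 2 ≤ n) {ι : Type} (U : ι → Set (EuclideanSpace ℝ (Fin n)))
    (h1 : ∀ i, volume (U i) = 1) (h0 : volume (⋃ i, U i)ᶜ = 0) : Infinite ι := by
  by_contra h
  rw [not_infinite_iff_finite] at h
  have := Fintype.ofFinite ι
  have h2 : ENNReal.ofReal (Fintype.card ι + 1) ≤ Fintype.card ι := by
    rw [← vphi_vol_le n hn (Fintype.card ι + 1) (by positivity)]
    calc _ ≤ volume ((⋃ i, U i) ∪ (⋃ i, U i)ᶜ) := measure_mono (by rw [union_compl_self]; simp)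
      _ ≤ volume (⋃ i, U i) + 0 := by rw [← h0]; exact measure_union_le _ _
      _ ≤ ∑ i, volume (U i) := by rw [add_zero]; exact measure_iUnion_fintype_le _ _
      _ = _ := by simp [h1]
  rw [← ENNReal.ofReal_natCast, ENNReal.ofReal_le_ofReal_iff (by positivity)] at h2
  linarith

lemma exists_partition (n : ℕ) (hn : 2 ≤ n) : ∃ R, IsUnitPartition n R := by
  have hd : Pairwise (fun i j : ℕ => Disjoint (vphi n ⁻¹' Ioo (i:ℝ) (i+1)) (vphi n ⁻¹' Ioo (j:ℝ) (j+1))) := by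
    intro i j hij
    rw [Set.disjoint_left]
    rintro x ⟨h1, h2⟩ ⟨h3, h4⟩
    have h5 : (i:ℝ) < ((j+1 : ℕ):ℝ) := by push_cast; linarith
    have h6 : (j:ℝ) < ((i+1 : ℕ):ℝ) := by push_cast; linarith
    rw [Nat.cast_lt] at h5 h6
    omega
  have h0 : volume (⋃ i : ℕ, vphi n ⁻¹' Ioo (i:ℝ) (i+1))ᶜ = 0 := by
    refine measure_mono_null (t := ⋃ i : ℕ, vphi n ⁻¹' {(i:ℝ)}) ?_
      (measure_iUnion_null fun i => vphi_lev0 n hn _)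
    intro x hx
    by_contra hx2
    refine hx (mem_iUnion.2 ⟨⌊vphi n x⌋₊, lt_of_le_of_ne (Nat.floor_le (vphi_nonneg n x)) ?_,
      Nat.lt_floor_add_one _⟩)
    intro h
    exact hx2 (mem_iUnion.2 ⟨_, h.symm⟩)
  obtain ⟨R, hR, -⟩ := assemble n (fun i : ℕ => vphi n ⁻¹' Ioo (i:ℝ) (i+1))
    (fun i => isOpen_Ioo.preimage (vphi_cont n)) hd
    (fun i => by rw [vphi_vol n hn _ _ (by positivity) (by linarith)]; simp) h0
  exact ⟨R, hR⟩

lemma ratio_eq (n : ℕ) (hn : 2 ≤ n) (R : ℕ → Set (EuclideanSpace ℝ (Fin n))) (v : ℝ) (hv : 0 ≤ v) :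
    perimVolRatio n R (vrad n v) =
      μH[(n : ℝ) - 1] ((⋃ j, frontier (R j)) ∩ {x | vphi n x ≤ v}) / ENNReal.ofReal v := by
  have h0 := vrad_nonneg n v hv
  rw [perimVolRatio, vol_cb n _ h0, ← vphi_le n hn _ h0, vrad_spec n hn v hv]

lemma vrad_vol (n : ℕ) (hn : 2 ≤ n) (r : ℝ) (hr : 0 ≤ r) : vrad n (ubv n * r ^ n) = r := by
  have hc := ubv_pos n
  have h0 : 0 ≤ ubv n * r ^ n := by positivity
  have := vrad_spec n hn _ h0
  rw [mul_right_inj' hc.ne', pow_left_inj₀ (vrad_nonneg n _ h0) hr (by omega)] at this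
  exact this

end conc

/-- Existence of a least-perimeter partition of `ℝⁿ` into regions of unit volume. -/
theorem exists_perimeter_minimizing_unit_partition (n : ℕ) (hn : 2 ≤ n) :
    ∃ R : ℕ → Set (EuclideanSpace ℝ (Fin n)), IsUnitPartition n R ∧
      limitRatio n R =
        ⨅ (S : ℕ → Set (EuclideanSpace ℝ (Fin n))) (_ : IsUnitPartition n S),
          limitRatio n S := by
  obtain ⟨M, hM⟩ : ∃ M, M = ⨅ (S : ℕ → Set (EuclideanSpace ℝ (Fin n))) (_ : IsUnitPartition n S),
          limitRatio n S := ⟨_, rfl⟩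
  rw [← hM]
  have hMle : ∀ S, IsUnitPartition n S → M ≤ limitRatio n S := fun S hS => hM ▸ iInf₂_le S hS
  by_cases hMtop : M = ⊤
  · obtain ⟨R, hR⟩ := exists_partition n hn
    exact ⟨R, hR, le_antisymm (by rw [hMtop]; exact le_top) (hMle R hR)⟩
  have hMm : ENNReal.ofReal M.toReal = M := ENNReal.ofReal_toReal hMtop
  have hm0 : 0 ≤ M.toReal := ENNReal.toReal_nonneg
  generalize M.toReal = m at hMm hm0
  have hex : ∀ k : ℕ, ∃ S, IsUnitPartition n S ∧ limitRatio n S < ENNReal.ofReal (m + (1/2)^k) := by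
    intro k
    have : (⨅ (S : ℕ → Set (EuclideanSpace ℝ (Fin n))) (_ : IsUnitPartition n S),
          limitRatio n S) < ENNReal.ofReal (m + (1/2)^k) := by
      rw [← hM, ← hMm]
      exact (ENNReal.ofReal_lt_ofReal_iff (by positivity)).2 (by simp)
    simpa only [iInf_lt_iff, exists_prop] using this
  choose P hP hPl using hex
  have hfr : ∀ k, (⋃ j, interior (P k j))ᶜ = ⋃ j, frontier (P k j) := fun k =>
    frontier_union_eq n _ (hP k)
  have hup : ∀ k, ∀ᶠ v : ℝ in atTop, μH[(n : ℝ) - 1] ((⋃ j, interior (P k j))ᶜ ∩ {x | vphi n x ≤ v}) ≤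
      ENNReal.ofReal ((m + (1/2)^k) * v) := by
    intro k
    have h1 := (vrad_tendsto n hn).eventually (eventually_lt_of_limsup_lt (hPl k))
    filter_upwards [h1, eventually_gt_atTop 0] with v hv hv0
    rw [ratio_eq n hn _ v hv0.le, ← hfr k] at hv
    rw [ENNReal.ofReal_mul (by positivity)]
    exact (ENNReal.div_le_iff (by simpa using hv0) (by simp)).1 hv.le
  have hlow : ∀ k, ∃ᶠ v : ℝ in atTop, ENNReal.ofReal ((m - (1/2)^k) * v) ≤
      μH[(n : ℝ) - 1] ((⋃ j, interior (P k j))ᶜ ∩ {x | vphi n x ≤ v}) := by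
    intro k
    rcases le_or_gt m 0 with hm | hm
    · refine Eventually.frequently ?_
      filter_upwards [eventually_ge_atTop 0] with v hv
      rw [ENNReal.ofReal_of_nonpos]
      · exact bot_le
      · have : (0:ℝ) < (1/2)^k := by positivity
        exact mul_nonpos_of_nonpos_of_nonneg (by linarith) hv
    · have h1 : ENNReal.ofReal (m - (1/2)^k) < limitRatio n (P k) := by
        refine lt_of_lt_of_le ?_ (hMle _ (hP k))
        rw [← hMm]
        exact (ENNReal.ofReal_lt_ofReal_iff hm).2 (by simp)
      have h2 := (frequently_lt_of_lt_limsup (by isBoundedDefault) h1).and_eventually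
        (eventually_gt_atTop 0)
      have hc := ubv_pos n
      have ht : Tendsto (fun r : ℝ => ubv n * r ^ n) atTop atTop :=
        (tendsto_pow_atTop (by omega)).const_mul_atTop hc
      refine ht.frequently (h2.mono ?_)
      rintro r ⟨hr, hr0⟩
      have hv0 : 0 < ubv n * r ^ n := by positivity
      rw [← vrad_vol n hn r hr0.le, ratio_eq n hn _ _ hv0.le, ← hfr k] at hr
      rw [ENNReal.ofReal_mul' hv0.le]
      exact (ENNReal.le_div_iff_mul_le (Or.inl (by simpa using hv0)) (Or.inl (by simp))).1 hr.le
  have hHfin : ∀ k v, μH[(n : ℝ) - 1] ((⋃ j, interior (P k j))ᶜ ∩ {x | vphi n x ≤ v}) < ⊤ := by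
    intro k v
    obtain ⟨w, hw, hvw⟩ := ((hup k).and (eventually_ge_atTop v)).exists
    refine (measure_mono ?_).trans_lt (hw.trans_lt ENNReal.ofReal_lt_top)
    exact inter_subset_inter_right _ (fun x hx => le_trans (show vphi n x ≤ v from hx) hvw)
  have hW0 : ∀ k, volume (⋃ j, interior (P k j))ᶜ = 0 := by
    intro k
    refine volume_null_of_hausdorff n _ fun r => ?_
    rw [← vphi_le n hn _ (by positivity)]
    exact hHfin k _
  obtain ⟨ι, hι, U, hUo, hUd, hU1, hU0, hUb⟩ := core_exists volume (μH[(n : ℝ) - 1]) (vphi n)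
    (vphi_cont n) (vphi_nonneg n) (vphi_vol n hn) (vphi_fin n hn) (vphi_lev0 n hn) (vphi_lev n hn)
    (fun k j => interior (P k j)) (fun k j => isOpen_interior)
    (fun k i j hij => ((hP k).1 hij).mono interior_subset interior_subset)
    (fun k j => (measure_mono interior_subset).trans ((hP k).2.2.1 j).le)
    hW0 hHfin m hm0 hup hlow
  have hinf := infinite_index n hn U hU1 hU0
  obtain ⟨R, hR, hRf⟩ := assemble n U hUo hUd hU1 hU0
  refine ⟨R, hR, le_antisymm ?_ (hMle R hR)⟩
  refine ENNReal.le_of_forall_pos_le_add fun δ hδ _ => ?_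
  rw [← hMm, ← ENNReal.ofReal_coe_nnreal, ← ENNReal.ofReal_add hm0 (NNReal.coe_nonneg δ)]
  have hc := ubv_pos n
  have ht : Tendsto (fun r : ℝ => ubv n * r ^ n) atTop atTop :=
    (tendsto_pow_atTop (by omega)).const_mul_atTop hc
  refine limsup_le_of_le (by isBoundedDefault) ?_
  filter_upwards [ht.eventually (hUb δ hδ), eventually_gt_atTop 0] with r hr hr0
  have hv0 : 0 < ubv n * r ^ n := by positivity
  rw [← vrad_vol n hn r hr0.le, ratio_eq n hn _ _ hv0.le]
  rw [ENNReal.div_le_iff (by simpa using hv0) (by simp), ← ENNReal.ofReal_mul (by positivity)]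
  exact (measure_mono (inter_subset_inter_left _ hRf)).trans hr
end

section
/- For every n ≥ 2, there exists a partition of ℝ^n into countably many pairwise disjoint measurable regions, each of Lebesgue measure 1 and each a bounded subset of ℝ^n, whose union is all of ℝ^n, and whose limiting perimeter-per-volume ratio equals the infimum of the limiting perimeter-per-volume ratios over all partitions of ℝ^n into countably many pairwise disjoint measurable regions of Lebesgue measure 1. That is, the minimizing partition can be chosen so that every region is bounded. -/
open MeasureTheory Set Metric Filter

theorem unitSphere_hausdorff_lt_top (m : ℕ) :
    μH[(m : ℝ)] (sphere (0 : EuclideanSpace ℝ (Fin (m+1))) 1) < ⊤ := by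
  let φ : Fin (m+1) → ℝ → (Fin m → ℝ) → EuclideanSpace ℝ (Fin (m+1)) :=
    fun i s y => WithLp.toLp 2 (i.insertNth s y)
  have hφi : ∀ i s y, φ i s y i = s := by intro i s y; simp [φ]
  have hφ : ∀ i s, ContDiff ℝ 1 (φ i s) := by
    intro i s
    rw [contDiff_euclidean]
    intro k
    rcases Fin.eq_self_or_eq_succAbove i k with h | ⟨j, h⟩
    · subst h; simp only [hφi]; exact contDiff_const
    · subst h; simp only [φ, Fin.insertNth_apply_succAbove]; fun_prop
  let ψ : Fin (m+1) → ℝ → (Fin m → ℝ) → EuclideanSpace ℝ (Fin (m+1)) :=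
    fun i s y => ‖φ i s y‖⁻¹ • φ i s y
  have hne : ∀ i s y, s ≠ 0 → φ i s y ≠ 0 := by
    intro i s y hs h
    apply hs
    have := hφi i s y
    rw [h] at this; simpa using this.symm
  have hψ : ∀ i s, s ≠ 0 → ContDiff ℝ 1 (ψ i s) := by
    intro i s hs
    have h1 : ContDiff ℝ 1 (fun y => ‖φ i s y‖) := (hφ i s).norm ℝ (fun y => hne i s y hs)
    exact (h1.inv (fun y => norm_ne_zero_iff.2 (hne i s y hs))).smul (hφ i s)
  have hK : IsCompact (Icc (fun _ => -1) (fun _ => 1) : Set (Fin m → ℝ)) := isCompact_Icc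
  have hfin : ∀ i s, s ≠ 0 → μH[(m : ℝ)] (ψ i s '' (Icc (fun _ => -1) (fun _ => 1))) < ⊤ := by
    intro i s hs
    obtain ⟨K, hL⟩ := (LocallyLipschitz.locallyLipschitzOn (s := Icc (fun _ => -1) (fun _ => 1)) (show LocallyLipschitz (ψ i s) from (hψ i s hs).locallyLipschitz)).exists_lipschitzOnWith_of_compact hK
    refine (hL.hausdorffMeasure_image_le (by positivity)).trans_lt ?_
    have : (μH[(m : ℝ)] : Measure (Fin m → ℝ)) = volume := by
      have := hausdorffMeasure_pi_real (ι := Fin m)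
      simpa using this
    rw [this]
    exact ENNReal.mul_lt_top (ENNReal.rpow_lt_top_of_nonneg (by positivity) (by simp)) hK.measure_lt_top
  have hcov : sphere (0 : EuclideanSpace ℝ (Fin (m+1))) 1 ⊆
      ⋃ i, (ψ i 1 '' (Icc (fun _ => -1) (fun _ => 1))) ∪ (ψ i (-1) '' (Icc (fun _ => -1) (fun _ => 1))) := by
    intro u hu
    have hu1 : ‖u‖ = 1 := by simpa using hu
    obtain ⟨i, hi⟩ := Finite.exists_max (fun k => |u k|)
    have hpos : 0 < |u i| := by
      rcases (abs_nonneg (u i)).lt_or_eq with h | h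
      · exact h
      · exfalso
        have : u = 0 := by
          ext k
          have := hi k
          rw [← h] at this
          simpa using this
        rw [this] at hu1; simp at hu1
    let y : Fin m → ℝ := fun j => u (i.succAbove j) / |u i|
    have hy : y ∈ (Icc (fun _ => -1) (fun _ => 1) : Set (Fin m → ℝ)) := by
      constructor <;> intro j
      all_goals
        have := hi (i.succAbove j)
        have h2 := abs_le.1 this
        simp only [y]
      · rw [le_div_iff₀ hpos]; linarith
      · rw [div_le_iff₀ hpos]; linarith
    have key : ∀ s : ℝ, u i = s * |u i| → ψ i s y = u := by
      intro s hs
      have h1 : φ i s y = |u i|⁻¹ • u := by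
        ext k
        rcases Fin.eq_self_or_eq_succAbove i k with h | ⟨j, h⟩
        · subst h; rw [hφi]; simp; field_simp; exact hs.symm
        · subst h; simp [φ, y]; field_simp
      simp only [ψ, h1, norm_smul, hu1, smul_smul]
      simp [hpos.ne']
    rw [mem_iUnion]
    refine ⟨i, ?_⟩
    rcases le_total 0 (u i) with h | h
    · left; exact ⟨y, hy, key 1 (by rw [abs_of_nonneg h]; ring)⟩
    · right; exact ⟨y, hy, key (-1) (by rw [abs_of_nonpos h]; ring)⟩
  refine (measure_mono hcov).trans_lt ?_
  refine (measure_iUnion_fintype_le _ _).trans_lt ?_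
  rw [ENNReal.sum_lt_top]
  intro i _
  exact (measure_union_le _ _).trans_lt (ENNReal.add_lt_top.2 ⟨hfin i 1 (by simp), hfin i (-1) (by simp)⟩)

theorem sphere_hausdorff_le (n : ℕ) (hn : 2 ≤ n) : ∃ C : NNReal, ∀ (x : EuclideanSpace ℝ (Fin n)) (r : ℝ),
    0 ≤ r → μH[(n : ℝ) - 1] (sphere x r) ≤ C * ENNReal.ofReal (r ^ (n-1)) := by
  obtain ⟨m, rfl⟩ : ∃ m, n = m + 1 := ⟨n - 1, by omega⟩
  have e : ((m + 1 : ℕ) : ℝ) - 1 = m := by simp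
  rw [e]
  have h := unitSphere_hausdorff_lt_top m
  refine ⟨(μH[(m : ℝ)] (sphere (0 : EuclideanSpace ℝ (Fin (m+1))) 1)).toNNReal, fun x r hr => ?_⟩
  rw [ENNReal.coe_toNNReal h.ne, mul_comm]
  have hL : LipschitzWith (Real.toNNReal r) (fun y : EuclideanSpace ℝ (Fin (m+1)) => x + r • y) := by
    apply LipschitzWith.of_dist_le_mul
    intro a b
    simp [dist_eq_norm, ← smul_sub, norm_smul, abs_of_nonneg hr, hr]
  have := hL.hausdorffMeasure_image_le (d := (m : ℝ)) (by positivity) (sphere 0 1)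
  refine le_trans (measure_mono ?_) (this.trans_eq ?_)
  · intro z hz
    rcases hr.eq_or_lt with h0 | h0
    · have : z = x := by simpa [← h0] using hz
      refine ⟨EuclideanSpace.single 0 1, by simp, by simp [← h0, this]⟩
    · refine ⟨r⁻¹ • (z - x), ?_, ?_⟩
      · have : ‖z - x‖ = r := by simpa [dist_eq_norm] using hz
        simp [norm_smul, this, abs_of_pos h0, h0.ne']
      · simp [smul_smul, h0.ne']
  · congr 1
    rw [ENNReal.rpow_natCast]
    rw [Nat.add_sub_cancel, ENNReal.ofReal_pow hr]; rfl

theorem limsup_le_of_eps {a : ℝ → ENNReal} {L : ENNReal}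
    (h : ∀ ε : NNReal, 0 < ε → ∀ᶠ r in atTop, a r ≤ L + ε) : limsup a atTop ≤ L := by
  apply ENNReal.le_of_forall_pos_le_add
  intro ε hε _
  exact limsup_le_of_le (by isBoundedDefault) (h ε hε)

theorem ball_vol {n : ℕ} (hn : 2 ≤ n) (x : EuclideanSpace ℝ (Fin n)) {r : ℝ} (hr : 0 ≤ r) :
    volume (ball x r) = ENNReal.ofReal (r ^ n) * volume (ball (0 : EuclideanSpace ℝ (Fin n)) 1) := by
  have : Nonempty (Fin n) := ⟨⟨0, by omega⟩⟩
  have := Measure.addHaar_ball (volume : Measure (EuclideanSpace ℝ (Fin n))) x hr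
  simpa using this

theorem cball_vol {n : ℕ} (x : EuclideanSpace ℝ (Fin n)) {r : ℝ} (hr : 0 ≤ r) :
    volume (closedBall x r) = ENNReal.ofReal (r ^ n) * volume (ball (0 : EuclideanSpace ℝ (Fin n)) 1) := by
  have := Measure.addHaar_closedBall (volume : Measure (EuclideanSpace ℝ (Fin n))) x hr
  simpa using this

/-- lower-order terms are negligible -/
theorem eventually_small {n : ℕ} (hn : 2 ≤ n) (C : NNReal) (ε : NNReal) (hε : 0 < ε) :
    ∀ᶠ r : ℝ in atTop, C * ENNReal.ofReal (r ^ (n-1)) ≤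
      ε * volume (closedBall (0 : EuclideanSpace ℝ (Fin n)) r) := by
  set v := volume (ball (0 : EuclideanSpace ℝ (Fin n)) 1) with hv
  have hv0 : 0 < v := measure_ball_pos _ _ (by norm_num)
  have hvt : v ≠ ⊤ := measure_ball_lt_top.ne
  have hv' : 0 < v.toReal := ENNReal.toReal_pos hv0.ne' hvt
  have hε' : (0 : ℝ) < ε := hε
  filter_upwards [eventually_ge_atTop (C / (ε * v.toReal) : ℝ), eventually_ge_atTop (1:ℝ)] with r hr hr1
  have hr0 : 0 ≤ r := by linarith
  rw [cball_vol _ hr0, ← hv, ← ENNReal.ofReal_toReal hvt, ← ENNReal.ofReal_coe_nnreal (p := C),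
    ← ENNReal.ofReal_coe_nnreal (p := ε), ← ENNReal.ofReal_mul (by positivity),
    ← ENNReal.ofReal_mul (by positivity), ← ENNReal.ofReal_mul (by positivity)]
  apply ENNReal.ofReal_le_ofReal
  rw [div_le_iff₀ (by positivity)] at hr
  obtain ⟨m, rfl⟩ : ∃ m, n = m + 1 := ⟨n - 1, by omega⟩
  rw [Nat.add_sub_cancel, pow_succ]
  have : 0 ≤ r ^ m := by positivity
  nlinarith [mul_le_mul_of_nonneg_left hr this]

theorem vol_eventually_large {n : ℕ} (hn : 2 ≤ n) (K : NNReal) (ε : NNReal) (hε : 0 < ε) :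
    ∀ᶠ r : ℝ in atTop, (K : ENNReal) ≤ ε * volume (closedBall (0 : EuclideanSpace ℝ (Fin n)) r) := by
  filter_upwards [eventually_small hn K ε hε, eventually_ge_atTop (1:ℝ)] with r hr h1
  refine le_trans ?_ hr
  have : (1 : ENNReal) ≤ ENNReal.ofReal (r ^ (n-1)) := by
    rw [ENNReal.one_le_ofReal]; exact one_le_pow₀ h1
  calc (K : ENNReal) = K * 1 := by simp
    _ ≤ _ := by gcongr

theorem frontier_diff_subset' {X : Type*} [TopologicalSpace X] (s t : Set X) :
    frontier (s \ t) ⊆ frontier s ∪ frontier t := by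
  rw [sdiff_eq]
  refine (frontier_inter_subset _ _).trans ?_
  rw [frontier_compl]
  exact union_subset_union inter_subset_left inter_subset_right

theorem completion {n : ℕ} (hn : 2 ≤ n) (p : ℕ → Set (EuclideanSpace ℝ (Fin n)))
    (hd : Pairwise (Function.onFun Disjoint p)) (hm : ∀ j, MeasurableSet (p j))
    (hv : ∀ j, volume (p j) ≤ 1) (hU : (⋃ j, p j) = univ) (hb : ∀ j, Bornology.IsBounded (p j)) :
    ∃ R : ℕ → Set (EuclideanSpace ℝ (Fin n)), IsUnitPartition n R ∧
      (∀ j, Bornology.IsBounded (R j)) ∧ limitRatio n R ≤ limitRatio n p := by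
  obtain ⟨C, hC⟩ := sphere_hausdorff_le n hn
  -- radii
  have hrad : ∃ (ρ : ℝ) (τ : ENNReal → ℝ), 0 ≤ ρ ∧ ∀ v ≤ 1, 0 ≤ τ v ∧ τ v ≤ ρ ∧
      ∀ c : EuclideanSpace ℝ (Fin n), volume (ball c (τ v)) = v := by
    set V := volume (ball (0 : EuclideanSpace ℝ (Fin n)) 1) with hV
    have hV0 : V ≠ 0 := (measure_ball_pos _ _ (by norm_num)).ne'
    have hVt : V ≠ ⊤ := measure_ball_lt_top.ne
    refine ⟨((1 / V).toReal) ^ (1 / (n:ℝ)), fun v => ((v / V).toReal) ^ (1 / (n:ℝ)), by positivity, ?_⟩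
    intro v hv1
    have hvV : v / V ≠ ⊤ := ENNReal.div_ne_top (ne_top_of_le_ne_top (by simp) hv1) hV0
    refine ⟨by positivity, ?_, fun c => ?_⟩
    · apply Real.rpow_le_rpow (by positivity) _ (by positivity)
      apply ENNReal.toReal_mono (ENNReal.div_ne_top (by simp) hV0)
      gcongr
    · rw [ball_vol hn c (by positivity), ← hV, ← Real.rpow_natCast, ← Real.rpow_mul (by positivity)]
      rw [one_div_mul_cancel (by positivity), Real.rpow_one, ENNReal.ofReal_toReal hvV]
      exact ENNReal.div_mul_cancel hV0 hVt
  obtain ⟨ρ, τ, hρ, hτ⟩ := hrad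
  have hB : ∀ j, ∃ B : ℝ, 0 ≤ B ∧ p j ⊆ closedBall 0 B := by
    intro j
    obtain ⟨B, hB⟩ := (hb j).subset_closedBall 0
    exact ⟨max B 0, le_max_right _ _, hB.trans (closedBall_subset_closedBall (le_max_left _ _))⟩
  choose B hB0 hB using hB
  let s : ℕ → ℝ := fun j => ∑ m ∈ Finset.range (j+1), (B m + 1 + 2 * ρ)
  have hs_succ : ∀ j, s (j+1) = s j + (B (j+1) + 1 + 2 * ρ) := fun j => Finset.sum_range_succ _ _
  have hs_mono : Monotone s := monotone_nat_of_le_succ (fun j => by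
    rw [hs_succ]; linarith [hB0 (j+1)])
  have hs0 : s 0 = B 0 + 1 + 2 * ρ := by simp [s]
  have hsB : ∀ j, B j + ρ < s j := by
    intro j
    have : ∀ j, 0 ≤ s j := fun j => Finset.sum_nonneg (fun m _ => by linarith [hB0 m])
    cases j with
    | zero => rw [hs0]; linarith
    | succ j => rw [hs_succ]; linarith [this j]
  have hsj : ∀ j : ℕ, j + ρ < s j := by
    intro j
    induction j with
    | zero => rw [hs0]; simp; linarith [hB0 0]
    | succ j ih => rw [hs_succ]; push_cast; linarith [hB0 (j+1)]
  have hs_lt : ∀ i j, i < j → s i + 2 * ρ ≤ s j := by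
    intro i j hij
    have h1 := hs_mono (Nat.succ_le_of_lt hij)
    have h2 := hs_succ i
    simp only [Nat.succ_eq_add_one] at h1
    linarith [hB0 (i+1)]
  let e : EuclideanSpace ℝ (Fin n) := EuclideanSpace.single ⟨0, by omega⟩ 1
  have he : ‖e‖ = 1 := by simp [e]
  let c : ℕ → EuclideanSpace ℝ (Fin n) := fun j => s j • e
  have hs_nonneg : ∀ j, 0 ≤ s j := fun j => by linarith [hsB j, hB0 j]
  have hcn : ∀ j, ‖c j‖ = s j := fun j => by simp [c, norm_smul, he, hs_nonneg j]
  let W : ℕ → Set (EuclideanSpace ℝ (Fin n)) := fun i => Nat.rec ∅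
    (fun i W => W ∪ ball (c i) (τ (1 - volume (p i \ W)))) i
  let t : ℕ → ℝ := fun i => τ (1 - volume (p i \ W i))
  let b : ℕ → Set (EuclideanSpace ℝ (Fin n)) := fun i => ball (c i) (t i)
  have hW : ∀ i, W (i+1) = W i ∪ b i := fun i => rfl
  have ht : ∀ i, 0 ≤ t i ∧ t i ≤ ρ ∧ volume (b i) = 1 - volume (p i \ W i) := fun i =>
    ⟨(hτ _ tsub_le_self).1, (hτ _ tsub_le_self).2.1, (hτ _ tsub_le_self).2.2 _⟩
  have hWsub : ∀ i, W i ⊆ ⋃ j, b j := by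
    intro i
    induction i with
    | zero => exact empty_subset _
    | succ i ih => rw [hW]; exact union_subset ih (subset_iUnion b i)
  have hWmono : Monotone W := monotone_nat_of_le_succ (fun i => by rw [hW]; exact subset_union_left)
  have hbW : ∀ i j, j < i → b j ⊆ W i := fun i j hij =>
    (by rw [hW]; exact subset_union_right : b j ⊆ W (j+1)).trans (hWmono (Nat.succ_le_of_lt hij))
  -- points of balls are far
  have hfar : ∀ j x, x ∈ closedBall (c j) (t j) → s j - ρ ≤ ‖x‖ := by
    intro j x hx
    have h1 : ‖x - c j‖ ≤ t j := by simpa [dist_eq_norm] using hx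
    have h2 := norm_sub_norm_le (c j) x
    rw [norm_sub_rev, hcn] at h2
    linarith [(ht j).2.1]
  have hbp : ∀ i j, i ≤ j → Disjoint (p i) (b j) := by
    intro i j hij
    rw [Set.disjoint_left]
    intro x hx hxb
    have h1 := hfar j x (ball_subset_closedBall hxb)
    have h2 : ‖x‖ ≤ B i := by simpa using hB i hx
    have h3 := hs_mono hij
    linarith [hsB i]
  have hdiff : ∀ i, p i \ (⋃ j, b j) = p i \ W i := by
    intro i
    ext x
    constructor
    · rintro ⟨h1, h2⟩; exact ⟨h1, fun h => h2 (hWsub i h)⟩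
    · rintro ⟨h1, h2⟩
      refine ⟨h1, fun h => ?_⟩
      obtain ⟨j, hj⟩ := mem_iUnion.1 h
      rcases lt_or_ge j i with hji | hji
      · exact h2 (hbW i j hji hj)
      · exact Set.disjoint_left.1 (hbp i j hji) h1 hj
  have hbb' : ∀ i j, i < j → Disjoint (b i) (b j) := by
    intro i j hij
    apply ball_disjoint_ball
    have : dist (c i) (c j) = s j - s i := by
      rw [dist_comm, dist_eq_norm]
      simp only [c]
      rw [← sub_smul, norm_smul, he, mul_one, Real.norm_eq_abs, abs_of_nonneg]
      linarith [hs_lt i j hij]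
    rw [this]
    linarith [hs_lt i j hij, (ht i).2.1, (ht j).2.1]
  have hbb : ∀ i j, i ≠ j → Disjoint (b i) (b j) := by
    intro i j hij
    rcases lt_or_gt_of_ne hij with h | h
    · exact hbb' i j h
    · exact (hbb' j i h).symm
  have hbm : ∀ i, MeasurableSet (b i) := fun i => measurableSet_ball
  have hUb : MeasurableSet (⋃ j, b j) := MeasurableSet.iUnion hbm
  have hlf : LocallyFinite b := by
    intro x
    refine ⟨ball x 1, ball_mem_nhds x one_pos, ?_⟩
    apply (Set.finite_Iio (⌈‖x‖ + 1⌉₊)).subset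
    rintro j ⟨y, hy1, hy2⟩
    have h1 := hfar j y (ball_subset_closedBall hy1)
    have h2 : ‖y - x‖ < 1 := by simpa [dist_eq_norm] using hy2
    have h3 := norm_sub_norm_le y x
    rw [mem_Iio, Nat.lt_ceil]
    linarith [hsj j]
  have hfrU : frontier (⋃ j, b j) ⊆ ⋃ j, sphere (c j) (t j) := by
    intro x hx
    rw [frontier, hlf.closure_iUnion, (isOpen_iUnion (fun i => isOpen_ball)).interior_eq] at hx
    obtain ⟨h1, h2⟩ := hx
    obtain ⟨j, hj⟩ := mem_iUnion.1 h1
    refine mem_iUnion.2 ⟨j, ?_⟩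
    have hj1 : dist x (c j) ≤ t j := closure_ball_subset_closedBall hj
    have hj2 : ¬ dist x (c j) < t j := fun h => h2 (mem_iUnion.2 ⟨j, h⟩)
    exact le_antisymm hj1 (not_lt.1 hj2)
  let R : ℕ → Set (EuclideanSpace ℝ (Fin n)) := fun i => (p i \ ⋃ j, b j) ∪ b i
  have hdis : ∀ i j, Disjoint (p i \ ⋃ j, b j) (b j) := fun i j =>
    disjoint_sdiff_left.mono_right (subset_iUnion b j)
  refine ⟨R, ⟨?_, ?_, ?_, ?_⟩, ?_, ?_⟩
  · intro i j hij
    have h1 : Disjoint (p i) (p j) := hd hij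
    simp only [Function.onFun, R]
    rw [disjoint_union_left, disjoint_union_right, disjoint_union_right]
    exact ⟨⟨h1.mono sdiff_subset sdiff_subset, hdis i j⟩, (hdis j i).symm, hbb i j hij⟩
  · exact fun i => ((hm i).diff hUb).union (hbm i)
  · intro i
    simp only [R]
    rw [measure_union (hdis i i) (hbm i), (ht i).2.2, hdiff]
    exact add_tsub_cancel_of_le ((measure_mono sdiff_subset).trans (hv i))
  · rw [eq_univ_iff_forall]
    intro x
    by_cases hx : x ∈ ⋃ j, b j
    · obtain ⟨j, hj⟩ := mem_iUnion.1 hx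
      exact mem_iUnion.2 ⟨j, Or.inr hj⟩
    · have : x ∈ ⋃ j, p j := hU ▸ mem_univ x
      obtain ⟨j, hj⟩ := mem_iUnion.1 this
      exact mem_iUnion.2 ⟨j, Or.inl ⟨hj, hx⟩⟩
  · exact fun i => ((hb i).subset sdiff_subset).union isBounded_ball
  · have hfr : (⋃ j, frontier (R j)) ⊆ (⋃ j, frontier (p j)) ∪ ⋃ j, sphere (c j) (t j) := by
      refine iUnion_subset fun i => ?_
      refine (frontier_union_subset _ _).trans (union_subset ?_ ?_)
      · refine inter_subset_left.trans ((frontier_diff_subset' _ _).trans ?_)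
        exact union_subset_union (subset_iUnion (fun j => frontier (p j)) i) hfrU
      · refine inter_subset_right.trans (subset_union_of_subset_right ?_ _)
        exact frontier_ball_subset_sphere.trans (subset_iUnion (fun j => sphere (c j) (t j)) i)
    set K : ENNReal := C * ENNReal.ofReal (ρ ^ (n-1)) with hK
    have hsph : ∀ r : ℝ, 0 ≤ r → μH[(n : ℝ) - 1] ((⋃ j, sphere (c j) (t j)) ∩ closedBall 0 r) ≤
        (⌈r⌉₊ + 1 : ℕ) * K := by
      intro r hr
      have hsub : (⋃ j, sphere (c j) (t j)) ∩ closedBall 0 r ⊆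
          ⋃ j ∈ Finset.range (⌈r⌉₊ + 1), sphere (c j) (t j) := by
        rintro x ⟨hx, hxr⟩
        obtain ⟨j, hj⟩ := mem_iUnion.1 hx
        have h1 := hfar j x (sphere_subset_closedBall hj)
        have h2 : ‖x‖ ≤ r := by simpa using hxr
        simp only [mem_iUnion]
        refine ⟨j, ?_, hj⟩
        rw [Finset.mem_range]
        apply Nat.lt_succ_of_lt
        rw [Nat.lt_ceil]
        linarith [hsj j]
      refine (measure_mono hsub).trans ((measure_biUnion_finset_le _ _).trans ?_)
      refine (Finset.sum_le_card_nsmul _ _ K ?_).trans ?_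
      · intro j _
        refine (hC _ _ (ht j).1).trans ?_
        rw [hK]
        gcongr
        · exact (ht j).1
        · exact (ht j).2.1
      · rw [Finset.card_range, nsmul_eq_mul]
    have hKt : K ≠ ⊤ := ENNReal.mul_ne_top (by simp) (by simp)
    apply limsup_le_of_eps
    intro ε hε
    by_cases hLt : limitRatio n p = ⊤
    · rw [hLt]; simp
    have hlt : limitRatio n p < limitRatio n p + (ε / 2 : NNReal) :=
      ENNReal.lt_add_right hLt (by simpa using (half_pos hε).ne')
    have hev := eventually_lt_of_limsup_lt (f := atTop) (u := perimVolRatio n p) hlt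
    filter_upwards [hev, eventually_small hn (3 * K.toNNReal) (ε / 2) (half_pos hε), eventually_ge_atTop (1:ℝ)] with r h1 h2 h3
    have hV0 : volume (closedBall (0 : EuclideanSpace ℝ (Fin n)) r) ≠ 0 :=
      (measure_closedBall_pos _ _ (by linarith)).ne'
    have hVt : volume (closedBall (0 : EuclideanSpace ℝ (Fin n)) r) ≠ ⊤ := measure_closedBall_lt_top.ne
    have h4 : perimVolRatio n R r ≤ perimVolRatio n p r +
        ((⌈r⌉₊ + 1 : ℕ) * K) / volume (closedBall (0 : EuclideanSpace ℝ (Fin n)) r) := by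
      unfold perimVolRatio
      rw [← ENNReal.add_div]
      gcongr
      refine (measure_mono (inter_subset_inter_left _ hfr)).trans ?_
      rw [union_inter_distrib_right]
      refine (measure_union_le _ _).trans ?_
      gcongr
      exact hsph r (by linarith)
    have h5 : ((⌈r⌉₊ + 1 : ℕ) * K) / volume (closedBall (0 : EuclideanSpace ℝ (Fin n)) r) ≤ (ε / 2 : NNReal) := by
      rw [ENNReal.div_le_iff hV0 hVt]
      refine le_trans ?_ h2
      rw [ENNReal.coe_mul, ENNReal.coe_toNNReal hKt]
      have h6 : ((⌈r⌉₊ + 1 : ℕ) : ENNReal) ≤ 3 * ENNReal.ofReal (r ^ (n-1)) := by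
        have : (3 : ENNReal) = ENNReal.ofReal 3 := by simp
        rw [this, ← ENNReal.ofReal_mul (by norm_num), ← ENNReal.ofReal_natCast]
        apply ENNReal.ofReal_le_ofReal
        have h7 := Nat.ceil_lt_add_one (show 0 ≤ r by linarith)
        have h8 : r ≤ r ^ (n-1) := le_self_pow₀ h3 (by omega)
        push_cast
        linarith
      calc _ ≤ (3 * ENNReal.ofReal (r ^ (n-1))) * K := by gcongr
        _ = _ := by push_cast; ring
    calc perimVolRatio n R r ≤ _ := h4
      _ ≤ (limitRatio n p + (ε / 2 : NNReal)) + (ε / 2 : NNReal) := by gcongr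
      _ = limitRatio n p + ε := by
        rw [add_assoc, ← ENNReal.coe_add, add_halves]

theorem gluing {n : ℕ} (hn : 2 ≤ n) (L : ENNReal) (hLt : L ≠ ⊤)
    (hlow : ∀ S, IsUnitPartition n S → L ≤ limitRatio n S)
    (hex : ∀ ε : NNReal, 0 < ε → ∃ S, IsUnitPartition n S ∧ limitRatio n S < L + ε) :
    ∃ p : ℕ → Set (EuclideanSpace ℝ (Fin n)), Pairwise (Function.onFun Disjoint p) ∧
      (∀ j, MeasurableSet (p j)) ∧ (∀ j, volume (p j) ≤ 1) ∧ (⋃ j, p j) = univ ∧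
      (∀ j, Bornology.IsBounded (p j)) ∧ limitRatio n p ≤ L := by
  obtain ⟨C, hC⟩ := sphere_hausdorff_le n hn
  let ε : ℕ → NNReal := fun k => 1 / ((k : NNReal) + 1)
  have hε0 : ∀ k, 0 < ε k := fun k => by positivity
  have hε1 : ∀ k, ε k ≤ 1 := fun k => by
    simp only [ε]; rw [div_le_iff₀ (by positivity)]; simp
  have hεanti : Antitone ε := by
    intro a b hab
    simp only [ε]
    gcongr
  choose S hS hSL using fun k => hex (ε k) (hε0 k)
  let V : ℝ → ENNReal := fun r => volume (closedBall (0 : EuclideanSpace ℝ (Fin n)) r)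
  have hVt : ∀ r, V r ≠ ⊤ := fun r => measure_closedBall_lt_top.ne
  have hV0 : ∀ r, 0 < r → V r ≠ 0 := fun r hr => (measure_closedBall_pos _ _ hr).ne'
  have hVmono : Monotone V := fun a b hab => measure_mono (closedBall_subset_closedBall hab)
  let F : ℕ → Set (EuclideanSpace ℝ (Fin n)) := fun k => ⋃ j, frontier (S k j)
  let f : ℕ → ℝ → ENNReal := fun k r => μH[(n : ℝ) - 1] (F k ∩ closedBall 0 r)
  have hup : ∀ k, ∀ᶠ r in atTop, ∀ r' ≥ r, f k r' ≤ (L + ε k) * V r' := by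
    intro k
    have h1 := eventually_lt_of_limsup_lt (f := atTop) (u := perimVolRatio n (S k)) (hSL k)
    obtain ⟨a, ha⟩ := (h1.and (eventually_gt_atTop (0:ℝ))).exists_forall_of_atTop
    filter_upwards [eventually_ge_atTop a] with r hr r' hr'
    obtain ⟨h2, h3⟩ := ha r' (by linarith)
    exact (ENNReal.div_le_iff (hV0 r' h3) (hVt r')).1 h2.le
  have hfreq : ∀ k, ∃ᶠ r in atTop, L * V r ≤ f k r + ε k * V r := by
    intro k hcon
    have h1 : ∀ᶠ r in atTop, perimVolRatio n (S k) r ≤ L - ε k := by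
      filter_upwards [hcon, eventually_gt_atTop (0:ℝ)] with r hr hr0
      rw [not_le] at hr
      have h2 : perimVolRatio n (S k) r + ε k ≤ L := by
        have : perimVolRatio n (S k) r + ε k = (f k r + ε k * V r) / V r := by
          rw [ENNReal.add_div, ENNReal.mul_div_cancel_right (hV0 r hr0) (hVt r)]; rfl
        rw [this, ENNReal.div_le_iff (hV0 r hr0) (hVt r)]
        exact hr.le
      exact ENNReal.le_sub_of_add_le_right (by simp) h2
    have h2 : limitRatio n (S k) ≤ L - ε k := limsup_le_of_le (by isBoundedDefault) h1
    have h3 := (hlow _ (hS k)).trans h2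
    by_cases hL0 : L = 0
    · obtain ⟨r, hr⟩ := hcon.exists
      exact hr (by simp [hL0])
    · exact absurd h3 (not_le.2 (ENNReal.sub_lt_self hLt hL0 (by simpa using (hε0 k).ne')))
  -- choice of radii
  have hchoose : ∀ k (s : ℝ), ∃ r : ℝ, (s + 1 ≤ r ∧ 1 ≤ r ∧ (L + 3) * V s ≤ ε k * V r) ∧
      (∀ r' ≥ r, f k r' ≤ (L + ε k) * V r') ∧ (∀ r' ≥ r, f (k+1) r' ≤ (L + ε (k+1)) * V r') ∧
      C * ENNReal.ofReal (r ^ (n-1)) ≤ ε k * V r ∧ L * V r ≤ f (k+1) r + ε (k+1) * V r := by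
    intro k s
    have hne : (L + 3) * V s ≠ ⊤ := ENNReal.mul_ne_top (by simp [hLt]) (hVt s)
    have hlarge := vol_eventually_large hn ((L + 3) * V s).toNNReal (ε k) (hε0 k)
    rw [ENNReal.coe_toNNReal hne] at hlarge
    obtain ⟨r, ⟨⟨⟨⟨⟨h1, h2⟩, h3⟩, h4⟩, h5⟩, h6⟩, h7⟩ := ((((((hfreq (k+1)).and_eventually (hup k)).and_eventually (hup (k+1))).and_eventually
      (eventually_small hn C (ε k) (hε0 k))).and_eventually hlarge).and_eventually
      (eventually_ge_atTop (s+1))).and_eventually (eventually_ge_atTop (1:ℝ)) |>.exists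
    exact ⟨r, ⟨h6, h7, h5⟩, h2, h3, h4, h1⟩
  choose next hnext using hchoose
  let ρ : ℕ → ℝ := fun k => Nat.rec (next 0 0) (fun k s => next (k+1) s) k
  have hρs : ∀ k, ρ (k+1) = next (k+1) (ρ k) := fun k => rfl
  have hQ : ∀ k, ρ k + 1 ≤ ρ (k+1) ∧ (L + 3) * V (ρ k) ≤ ε (k+1) * V (ρ (k+1)) := fun k =>
    ⟨(hnext (k+1) (ρ k)).1.1, (hnext (k+1) (ρ k)).1.2.2⟩
  have hP : ∀ k, 1 ≤ ρ k ∧ (∀ r' ≥ ρ k, f k r' ≤ (L + ε k) * V r') ∧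
      (∀ r' ≥ ρ k, f (k+1) r' ≤ (L + ε (k+1)) * V r') ∧
      C * ENNReal.ofReal (ρ k ^ (n-1)) ≤ ε k * V (ρ k) ∧
      L * V (ρ k) ≤ f (k+1) (ρ k) + ε (k+1) * V (ρ k) := by
    intro k
    cases k with
    | zero => exact ⟨(hnext 0 0).1.2.1, (hnext 0 0).2⟩
    | succ k => exact ⟨(hnext (k+1) (ρ k)).1.2.1, (hnext (k+1) (ρ k)).2⟩
  have hρmono : Monotone ρ := monotone_nat_of_le_succ (fun k => by linarith [(hQ k).1])
  have hρk : ∀ k : ℕ, (k : ℝ) + 1 ≤ ρ k := by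
    intro k
    induction k with
    | zero => simpa using (hP 0).1
    | succ k ih => push_cast; linarith [(hQ k).1]
  have hcover : ∀ r : ℝ, ∃ k, r < ρ k := fun r => by
    obtain ⟨k, hk⟩ := exists_nat_gt r
    exact ⟨k, by linarith [hρk k]⟩
  -- shells
  let bl : ℕ → Set (EuclideanSpace ℝ (Fin n)) := fun k => ball 0 (ρ k)
  have hblmono : Monotone bl := fun a b hab => ball_subset_ball (hρmono hab)
  let D : ℕ → Set (EuclideanSpace ℝ (Fin n)) := disjointed bl
  have hDd : Pairwise (Function.onFun Disjoint D) := disjoint_disjointed bl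
  have hDm : ∀ k, MeasurableSet (D k) := fun k => MeasurableSet.disjointed (fun _ => measurableSet_ball) k
  have hDsub : ∀ k, D k ⊆ bl k := fun k => disjointed_subset bl k
  have hDU : (⋃ k, D k) = univ := by
    rw [iUnion_disjointed, eq_univ_iff_forall]
    intro x
    obtain ⟨k, hk⟩ := hcover ‖x‖
    exact mem_iUnion.2 ⟨k, by simpa [bl] using hk⟩
  have hD0 : D 0 = ball 0 (ρ 0) := disjointed_zero bl
  have hDs : ∀ k, D (k+1) = ball 0 (ρ (k+1)) \ ball 0 (ρ k) := fun k => hblmono.disjointed_add_one k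
  let q : ℕ × ℕ → Set (EuclideanSpace ℝ (Fin n)) := fun a => S a.1 a.2 ∩ D a.1
  let U : Set (EuclideanSpace ℝ (Fin n)) := ⋃ a, frontier (q a)
  have hloc : ∀ (O : Set (EuclideanSpace ℝ (Fin n))) k x, IsOpen O → O ⊆ D k → x ∈ O → x ∈ U → x ∈ F k := by
    intro O k x hO hOD hxO hxU
    obtain ⟨⟨m, j⟩, hx⟩ := mem_iUnion.1 hxU
    have hcl : x ∈ closure (S m j ∩ D m) := hx.1
    have hni : x ∉ interior (S m j ∩ D m) := hx.2
    obtain ⟨y, hyO, hyS, hyD⟩ := mem_closure_iff.1 hcl O hO hxO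
    have hmk : m = k := by
      by_contra hmk
      exact Set.disjoint_left.1 (hDd hmk) hyD (hOD hyO)
    subst hmk
    refine mem_iUnion.2 ⟨j, closure_mono inter_subset_left hcl, fun hi => hni ?_⟩
    rw [interior_inter]
    exact ⟨hi, interior_maximal hOD hO hxO⟩
  let G : ℝ → ENNReal := fun r => μH[(n : ℝ) - 1] (U ∩ closedBall 0 r)
  have hO : ∀ k x, ρ k < ‖x‖ → ‖x‖ < ρ (k+1) → x ∈ U → x ∈ F (k+1) := by
    intro k x h1 h2 hxU
    refine hloc (ball 0 (ρ (k+1)) \ closedBall 0 (ρ k)) (k+1) x (isOpen_ball.sdiff isClosed_closedBall) ?_ ?_ hxU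
    · rw [hDs]; exact sdiff_subset_sdiff_right ball_subset_closedBall
    · exact ⟨by simpa using h2, by simpa using h1⟩
  have hG0 : G (ρ 0) ≤ (L + 3 * ε 0) * V (ρ 0) := by
    have hsub : U ∩ closedBall 0 (ρ 0) ⊆ (F 0 ∩ closedBall 0 (ρ 0)) ∪ sphere 0 (ρ 0) := by
      rintro x ⟨hxU, hx⟩
      have hx' : ‖x‖ ≤ ρ 0 := by simpa using hx
      rcases hx'.lt_or_eq with h | h
      · left
        exact ⟨hloc (ball 0 (ρ 0)) 0 x isOpen_ball hD0.ge (by simpa using h) hxU, hx⟩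
      · right; simpa using h
    calc G (ρ 0) ≤ f 0 (ρ 0) + μH[(n : ℝ) - 1] (sphere 0 (ρ 0)) :=
          (measure_mono hsub).trans (measure_union_le _ _)
      _ ≤ (L + ε 0) * V (ρ 0) + ε 0 * V (ρ 0) := by
          gcongr
          · exact (hP 0).2.1 _ le_rfl
          · exact (hC _ _ (by linarith [(hP 0).1])).trans (hP 0).2.2.2.1
      _ ≤ (L + ε 0) * V (ρ 0) + ε 0 * V (ρ 0) + ε 0 * V (ρ 0) := le_self_add
      _ = _ := by ring
  have hGk : ∀ k, G (ρ k) ≤ (L + 3 * ε k) * V (ρ k) := by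
    intro k
    induction k with
    | zero => exact hG0
    | succ k ih =>
      have hsub : U ∩ closedBall 0 (ρ (k+1)) ⊆ (U ∩ closedBall 0 (ρ k)) ∪
          ((F (k+1) ∩ closedBall 0 (ρ (k+1))) ∪ sphere 0 (ρ (k+1))) := by
        rintro x ⟨hxU, hx⟩
        have hx' : ‖x‖ ≤ ρ (k+1) := by simpa using hx
        rcases le_or_gt ‖x‖ (ρ k) with hk | hk
        · exact Or.inl ⟨hxU, by simpa using hk⟩
        right
        rcases hx'.lt_or_eq with h | h
        · exact Or.inl ⟨hO k x hk h hxU, hx⟩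
        · right; simpa using h
      have hprev : G (ρ k) ≤ ε (k+1) * V (ρ (k+1)) := by
        refine ih.trans (le_trans ?_ (hQ k).2)
        gcongr
        have : (ε k : ENNReal) ≤ 1 := by exact_mod_cast hε1 k
        calc (3 : ENNReal) * ε k ≤ 3 * 1 := by gcongr
          _ = 3 := by simp
      calc G (ρ (k+1)) ≤ G (ρ k) + (f (k+1) (ρ (k+1)) + μH[(n : ℝ) - 1] (sphere (0 : EuclideanSpace ℝ (Fin n)) (ρ (k+1)))) := by
            refine (measure_mono hsub).trans ((measure_union_le _ _).trans ?_)
            gcongr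
            exact measure_union_le _ _
        _ ≤ ε (k+1) * V (ρ (k+1)) + ((L + ε (k+1)) * V (ρ (k+1)) + ε (k+1) * V (ρ (k+1))) := by
            gcongr
            · exact (hP (k+1)).2.1 _ le_rfl
            · exact (hC _ _ (by linarith [(hP (k+1)).1])).trans (hP (k+1)).2.2.2.1
        _ = _ := by ring
  have hGr : ∀ k r, ρ k ≤ r → r < ρ (k+1) → G r ≤ (L + 5 * ε k) * V r := by
    intro k r h1 h2
    have hsub : U ∩ closedBall 0 r ⊆ (U ∩ closedBall 0 (ρ k)) ∪ ((F (k+1) ∩ closedBall 0 r) \ closedBall 0 (ρ k)) := by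
      rintro x ⟨hxU, hx⟩
      by_cases hxk : x ∈ closedBall (0 : EuclideanSpace ℝ (Fin n)) (ρ k)
      · exact Or.inl ⟨hxU, hxk⟩
      · have hx' : ‖x‖ ≤ r := by simpa using hx
        have hxk' : ρ k < ‖x‖ := by simpa using hxk
        exact Or.inr ⟨⟨hO k x hxk' (by linarith) hxU, hx⟩, hxk⟩
    have hA : G r ≤ G (ρ k) + μH[(n : ℝ) - 1] ((F (k+1) ∩ closedBall 0 r) \ closedBall 0 (ρ k)) :=
      (measure_mono hsub).trans (measure_union_le _ _)
    have hB : f (k+1) (ρ k) + μH[(n : ℝ) - 1] ((F (k+1) ∩ closedBall 0 r) \ closedBall 0 (ρ k)) = f (k+1) r := by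
      have := measure_inter_add_sdiff (μ := μH[(n : ℝ) - 1]) (F (k+1) ∩ closedBall 0 r)
        (measurableSet_closedBall (x := (0 : EuclideanSpace ℝ (Fin n))) (ε := ρ k))
      rw [inter_assoc, inter_eq_right.2 (closedBall_subset_closedBall h1)] at this
      exact this
    have hVV : V (ρ k) ≤ V r := hVmono h1
    have hee : (ε (k+1) : ENNReal) ≤ ε k := by exact_mod_cast hεanti (Nat.le_succ k)
    have hLV : L * V (ρ k) ≠ ⊤ := ENNReal.mul_ne_top hLt (hVt _)
    rw [← ENNReal.add_le_add_iff_left hLV]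
    calc L * V (ρ k) + G r ≤ (f (k+1) (ρ k) + ε (k+1) * V (ρ k)) +
          (G (ρ k) + μH[(n : ℝ) - 1] ((F (k+1) ∩ closedBall 0 r) \ closedBall 0 (ρ k))) := by
          gcongr; exact (hP k).2.2.2.2
      _ = f (k+1) r + ε (k+1) * V (ρ k) + G (ρ k) := by rw [← hB]; ring
      _ ≤ (L + ε k) * V r + ε k * V r + (L + 3 * ε k) * V (ρ k) := by
          gcongr
          · exact ((hP k).2.2.1 r h1).trans (by gcongr)
          · exact hGk k
      _ = L * V (ρ k) + ((L + ε k) * V r + ε k * V r + 3 * ε k * V (ρ k)) := by ring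
      _ ≤ L * V (ρ k) + ((L + ε k) * V r + ε k * V r + 3 * ε k * V r) := by gcongr
      _ = _ := by ring
  refine ⟨fun j => q (Nat.pairEquiv.symm j), ?_, ?_, ?_, ?_, ?_, ?_⟩
  · intro i j hij
    have hne : Nat.pairEquiv.symm i ≠ Nat.pairEquiv.symm j := fun h => hij (Nat.pairEquiv.symm.injective h)
    change Disjoint (q (Nat.pairEquiv.symm i)) (q (Nat.pairEquiv.symm j))
    generalize Nat.pairEquiv.symm i = a at hne ⊢
    generalize Nat.pairEquiv.symm j = b at hne ⊢
    simp only [q]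
    by_cases h : a.1 = b.1
    · have h2 : a.2 ≠ b.2 := fun h2 => hne (Prod.ext h h2)
      rw [← h]
      exact ((hS a.1).1 h2).mono inter_subset_left inter_subset_left
    · exact (hDd h).mono inter_subset_right inter_subset_right
  · exact fun j => ((hS _).2.1 _).inter (hDm _)
  · exact fun j => (measure_mono inter_subset_left).trans_eq ((hS _).2.2.1 _)
  · rw [eq_univ_iff_forall]
    intro x
    obtain ⟨k, hk⟩ := mem_iUnion.1 (hDU ▸ mem_univ x : x ∈ ⋃ k, D k)
    obtain ⟨j, hj⟩ := mem_iUnion.1 ((hS k).2.2.2 ▸ mem_univ x : x ∈ ⋃ j, S k j)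
    exact mem_iUnion.2 ⟨Nat.pairEquiv (k, j), by simpa [q] using ⟨hj, hk⟩⟩
  · exact fun j => isBounded_ball.subset (inter_subset_right.trans (hDsub _))
  · apply limsup_le_of_eps
    intro δ hδ
    obtain ⟨K, hK⟩ : ∃ K : ℕ, 5 * ε K ≤ δ := by
      obtain ⟨K, hK⟩ := exists_nat_gt (5 / δ)
      refine ⟨K, ?_⟩
      simp only [ε]
      rw [mul_one_div, div_le_iff₀ (by positivity)]
      rw [div_lt_iff₀ hδ] at hK
      calc 5 ≤ K * δ := hK.le
        _ ≤ δ * (K + 1) := by rw [mul_comm]; gcongr; simp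
    filter_upwards [eventually_ge_atTop (ρ K)] with r hr
    have hr0 : 0 < r := by linarith [(hP K).1]
    have hfind : ∃ k, K ≤ k ∧ ρ k ≤ r ∧ r < ρ (k+1) := by
      obtain ⟨m, hlt, hmin⟩ : ∃ m, r < ρ m ∧ ∀ k < m, ¬ r < ρ k :=
        let ⟨m, h1, h2⟩ := (wellFounded_lt (α := ℕ)).has_min {k | r < ρ k} (hcover r)
        ⟨m, h1, fun k hk hr => h2 k hr hk⟩
      have hKm : K < m := by
        by_contra h
        have := hρmono (not_lt.1 h)
        linarith
      obtain ⟨k, hk⟩ : ∃ k, m = k + 1 := ⟨m - 1, by omega⟩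
      refine ⟨k, by omega, ?_, hk ▸ hlt⟩
      exact not_lt.1 (hmin k (by omega))
    obtain ⟨k, hKk, hk1, hk2⟩ := hfind
    have hUeq : (⋃ j, frontier (q (Nat.pairEquiv.symm j))) = U :=
      Nat.pairEquiv.symm.surjective.iUnion_comp (fun a => frontier (q a))
    unfold perimVolRatio
    rw [hUeq]
    rw [ENNReal.div_le_iff (hV0 r hr0) (hVt r)]
    refine (hGr k r hk1 hk2).trans ?_
    have : (5 * ε k : ENNReal) ≤ δ := by
      have h1 : 5 * ε k ≤ δ := le_trans (by gcongr; exact hεanti hKk) hK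
      exact_mod_cast h1
    gcongr


/-- There is a perimeter-minimizing partition of `ℝⁿ` into regions of unit volume
all of whose regions are bounded. -/
theorem exists_perimeter_minimizing_unit_partition_bounded (n : ℕ) (hn : 2 ≤ n) :
    ∃ R : ℕ → Set (EuclideanSpace ℝ (Fin n)), IsUnitPartition n R ∧
      (∀ j, Bornology.IsBounded (R j)) ∧
      limitRatio n R =
        ⨅ (S : ℕ → Set (EuclideanSpace ℝ (Fin n))) (_ : IsUnitPartition n S),
          limitRatio n S := by
  set L := ⨅ (S : ℕ → Set (EuclideanSpace ℝ (Fin n))) (_ : IsUnitPartition n S),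
          limitRatio n S with hL
  have hlow : ∀ S, IsUnitPartition n S → L ≤ limitRatio n S := fun S hS => iInf₂_le S hS
  by_cases hLt : L = ⊤
  · obtain ⟨δ, hδ0, hδ⟩ : ∃ δ : ℝ, 0 < δ ∧ ∀ x : EuclideanSpace ℝ (Fin n), volume (ball x δ) ≤ 1 := by
      set V := volume (ball (0 : EuclideanSpace ℝ (Fin n)) 1) with hV
      have hVt : V ≠ ⊤ := measure_ball_lt_top.ne
      refine ⟨1 / (1 + V.toReal), by positivity, fun x => ?_⟩
      rw [ball_vol hn x (by positivity), ← hV, ← ENNReal.ofReal_toReal hVt,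
        ← ENNReal.ofReal_mul (by positivity), ENNReal.ofReal_le_one]
      have h0 : 0 ≤ V.toReal := ENNReal.toReal_nonneg
      rw [ENNReal.toReal_ofReal h0]
      have h1 : 1 / (1 + V.toReal) ≤ 1 := by
        rw [div_le_iff₀ (by positivity)]; linarith
      have h2 : (1 / (1 + V.toReal)) ^ n ≤ 1 / (1 + V.toReal) :=
        pow_le_of_le_one (by positivity) h1 (by omega)
      calc _ ≤ 1 / (1 + V.toReal) * V.toReal := by gcongr
        _ ≤ 1 := by rw [one_div_mul_eq_div, div_le_iff₀ (by positivity)]; linarith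
    let c := TopologicalSpace.denseSeq (EuclideanSpace ℝ (Fin n))
    obtain ⟨R, hR, hRb, -⟩ := completion hn (disjointed fun i => ball (c i) δ)
      (disjoint_disjointed _) (fun j => MeasurableSet.disjointed (fun _ => measurableSet_ball) j)
      (fun j => (measure_mono (disjointed_subset _ j)).trans (hδ _))
      (by
        rw [iUnion_disjointed, eq_univ_iff_forall]
        intro x
        obtain ⟨i, hy⟩ := (TopologicalSpace.denseRange_denseSeq (EuclideanSpace ℝ (Fin n))).exists_dist_lt x hδ0
        exact mem_iUnion.2 ⟨i, hy⟩)
      (fun j => isBounded_ball.subset (disjointed_subset _ j))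
    refine ⟨R, hR, hRb, ?_⟩
    have := hlow R hR
    rw [hLt] at this ⊢
    exact top_le_iff.1 this
  · obtain ⟨p, h1, h2, h3, h4, h5, h6⟩ := gluing hn L hLt hlow (fun ε hε => by
      have : L < L + ε := ENNReal.lt_add_right hLt (by simpa using hε.ne')
      nth_rewrite 1 [hL] at this
      simp only [iInf_lt_iff] at this
      obtain ⟨S, hS, hlt⟩ := this
      exact ⟨S, hS, hlt⟩)
    obtain ⟨R, hR, hRb, hRL⟩ := completion hn p h1 h2 h3 h4 h5
    exact ⟨R, hR, hRb, le_antisymm (hRL.trans h6) (hlow R hR)⟩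
end
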